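/- arXiv:2605.25238 — 8 statements merged into one kernel-verified Lean document; each statement's English description precedes it below -/
import Mathlib

section
/- Let p > 1 with Hölder conjugate q (1/p + 1/q = 1). There exist constants c, C > 0 depending only on p such that for every sequence V with V_n ≥ 0 for all n ≥ 1, every 𝔤 ∈ H^1 satisfying 𝔤_{n+1} ≥ 𝔤_n > 0 for all n ≥ 1, and every u ∈ H_0^1, one has c·∑_{n=1}^∞ V_{n+1}·R(q; 𝔤, u)_n ≤ ∑_{n=1}^∞ V_n·|∇u_n|^p + ∑_{n=1}^∞ (div(V·(∇𝔤)^{p−1})_n / 𝔤_n^{p−1})·|u_n|^p ≤ C·∑_{n=1}^∞ V_{n+1}·R(p; 𝔤, u)_n. -/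
open scoped BigOperators
open Finset Filter Asymptotics

noncomputable section

/-- Discrete gradient of a complex sequence: `(∇u)_n = u_n - u_{n-1}`. -/
def dgrad (u : ℤ → ℂ) : ℤ → ℂ := fun n => u n - u (n - 1)

/-- Discrete divergence of a complex sequence: `(div u)_n = u_{n+1} - u_n`. -/
def ddiv (u : ℤ → ℂ) : ℤ → ℂ := fun n => u (n + 1) - u n

/-- Discrete gradient of a real sequence. -/
def rgrad (g : ℤ → ℝ) : ℤ → ℝ := fun n => g n - g (n - 1)

/-- Discrete divergence of a real sequence. -/
def rdiv (g : ℤ → ℝ) : ℤ → ℝ := fun n => g (n + 1) - g n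

/-- `v^⟨a⟩ := v * |v|^(a-1)`, with `0^⟨a⟩ = 0`. -/
def sgnPow (a v : ℝ) : ℝ := v * |v| ^ (a - 1)

/-- The discrete `p`-Laplacian of order `m`:
`(-Δ_p^{(m)} g)_n = (-1)^m (div^m ((∇^m g)^⟨p-1⟩))_n`. -/
def pLap (p : ℝ) (m : ℕ) (g : ℤ → ℝ) : ℤ → ℝ :=
  fun n => (-1 : ℝ) ^ m * rdiv^[m] (fun k => sgnPow (p - 1) (rgrad^[m] g k)) n

/-- The remainder term `R(s; g, u)_n` (the exponent `p` is a separate parameter). -/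
def Rem (p s : ℝ) (g : ℤ → ℝ) (u : ℤ → ℂ) (n : ℤ) : ℝ :=
  if s ≤ 2 then
    ‖(Real.sqrt (g n / g (n + 1)) : ℂ) * u (n + 1)
        - (Real.sqrt (g (n + 1) / g n) : ℂ) * u n‖ ^ p
  else
    ‖(Real.sqrt (g n / g (n + 1)) : ℂ) * u (n + 1)
        - (Real.sqrt (g (n + 1) / g n) : ℂ) * u n‖ ^ (2 : ℝ)
      * (‖ddiv u n‖ + ‖u n‖ / g n * rdiv g n) ^ (p - 2)

/-- `∑_{n=a}^∞ f(n)` as a `tsum` over `ℕ`. -/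
def tsumFrom (a : ℤ) (f : ℤ → ℝ) : ℝ := ∑' n : ℕ, f (a + n)

/-- Tangent-line inequality for the convex power `x ↦ x ^ p` on the nonnegative reals. -/
lemma rpow_tangent_le {p a b : ℝ} (hp : 1 < p) (ha : 0 ≤ a) (hb : 0 ≤ b) :
    b ^ p + p * b ^ (p - 1) * (a - b) ≤ a ^ p := by
  rcases hb.eq_or_lt with rfl | hb
  · rw [Real.zero_rpow (by linarith), Real.zero_rpow (by linarith)]
    simpa using Real.rpow_nonneg ha p
  · have h := one_add_mul_self_le_rpow_one_add (s := a / b - 1) (by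
      have : 0 ≤ a / b := by positivity
      linarith) hp.le
    rw [add_sub_cancel, Real.div_rpow ha hb.le, le_div_iff₀ (by positivity)] at h
    have e : b ^ p = b ^ (p - 1) * b := by
      rw [← Real.rpow_add_one hb.ne']; congr 1; ring
    calc _ = (1 + p * (a / b - 1)) * b ^ p := by rw [e]; field_simp
      _ ≤ _ := h

/-- Tangent-line inequality for the concave power `x ↦ x ^ θ` on the nonnegative reals. -/
lemma rpow_le_tangent {θ a b : ℝ} (hθ : 0 ≤ θ) (hθ' : θ ≤ 1) (ha : 0 ≤ a) (hb : 0 < b) :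
    a ^ θ ≤ b ^ θ + θ * b ^ (θ - 1) * (a - b) := by
  have h := rpow_one_add_le_one_add_mul_self (s := a / b - 1) (by
      have : 0 ≤ a / b := by positivity
      linarith) hθ hθ'
  rw [add_sub_cancel, Real.div_rpow ha hb.le, div_le_iff₀ (by positivity)] at h
  have e : b ^ θ = b ^ (θ - 1) * b := by
    rw [← Real.rpow_add_one hb.ne']; congr 1; ring
  calc _ ≤ _ := h
    _ = _ := by rw [e]; field_simp

lemma sub_rpow_le_rpow_sub {k a b : ℝ} (hk : 1 ≤ k) (hb : 0 ≤ b) (hba : b ≤ a) :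
    (a - b) ^ k ≤ a ^ k - b ^ k := by
  have h := Real.add_rpow_le_rpow_add (sub_nonneg.2 hba) hb hk
  rw [sub_add_cancel] at h
  linarith

lemma rpow_sub_le_sub_rpow {k a b : ℝ} (hk : 0 ≤ k) (hk' : k ≤ 1) (hb : 0 ≤ b) (hba : b ≤ a) :
    a ^ k - b ^ k ≤ (a - b) ^ k := by
  have h := Real.rpow_add_le_add_rpow (sub_nonneg.2 hba) hb hk hk'
  rw [sub_add_cancel] at h
  linarith

/-- The Bregman divergence of `x ↦ x ^ p` on the nonnegative reals. -/
def powGap (p r s : ℝ) : ℝ := s ^ p - r ^ p - p * r ^ (p - 1) * (s - r)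

lemma powGap_le {p r s : ℝ} (hp : 1 < p) (hr : 0 ≤ r) (hs : 0 ≤ s) :
    powGap p r s ≤ p * ((s ^ (p - 1) - r ^ (p - 1)) * (s - r)) := by
  have h := rpow_tangent_le hp hr hs
  unfold powGap
  linarith

lemma le_powGap {p r s : ℝ} (hp : 1 < p) (hr : 0 ≤ r) (hs : 0 ≤ s) :
    p * (((r + s) / 2) ^ (p - 1) - r ^ (p - 1)) * ((r + s) / 2 - r) ≤ powGap p r s := by
  have h := rpow_tangent_le hp hs (b := (r + s) / 2) (by positivity)
  have h' := rpow_tangent_le hp (a := (r + s) / 2) (by positivity) hr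
  unfold powGap
  linarith

lemma rpow_eq_mul_rpow_sub_one {p a : ℝ} (hp : p ≠ 0) (ha : 0 ≤ a) :
    a ^ p = a ^ (p - 1) * a := by
  conv_lhs => rw [show p = p - 1 + 1 by ring]
  rw [Real.rpow_add_one' ha (by simpa using hp)]

lemma rpow_eq_sq_mul_rpow_sub_two {p a : ℝ} (hp : p ≠ 0) (ha : 0 ≤ a) :
    a ^ p = a ^ 2 * a ^ (p - 2) := by
  rw [← Real.rpow_natCast, ← Real.rpow_add' ha] <;> norm_num
  exact hp

lemma abs_sub_rpow_le_powGap {p r s : ℝ} (hp : 2 ≤ p) (hr : 0 ≤ r) (hs : 0 ≤ s) :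
    p / 2 ^ p * |s - r| ^ p ≤ powGap p r s := by
  refine le_trans ?_ (le_powGap (by linarith) hr hs)
  have key : (|s - r| / 2) ^ (p - 1) * (|s - r| / 2) ≤
      (((r + s) / 2) ^ (p - 1) - r ^ (p - 1)) * ((r + s) / 2 - r) := by
    rcases le_total r s with h | h
    · rw [abs_of_nonneg (by linarith)]
      have h1 := sub_rpow_le_rpow_sub (k := p - 1) (by linarith) hr
        (show r ≤ (r + s) / 2 by linarith)
      rw [show (r + s) / 2 - r = (s - r) / 2 by ring] at *
      exact mul_le_mul_of_nonneg_right h1 (by linarith)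
    · rw [abs_of_nonpos (by linarith)]
      have h1 := sub_rpow_le_rpow_sub (k := p - 1) (by linarith)
        (show 0 ≤ (r + s) / 2 by positivity) (show (r + s) / 2 ≤ r by linarith)
      rw [show r - (r + s) / 2 = -(s - r) / 2 by ring] at h1
      have h2 := mul_le_mul_of_nonneg_right h1 (show 0 ≤ -(s - r) / 2 by linarith)
      linarith
  rw [← rpow_eq_mul_rpow_sub_one (by linarith) (by positivity),
    Real.div_rpow (by positivity) (by norm_num)] at key
  calc _ = p * (|s - r| ^ p / 2 ^ p) := by ring
    _ ≤ _ := by rw [mul_assoc]; exact mul_le_mul_of_nonneg_left key (by linarith)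

lemma powGap_le_abs_sub_rpow {p r s : ℝ} (hp : 1 < p) (hp' : p ≤ 2) (hr : 0 ≤ r) (hs : 0 ≤ s) :
    powGap p r s ≤ p * |s - r| ^ p := by
  refine (powGap_le hp hr hs).trans (mul_le_mul_of_nonneg_left ?_ (by linarith))
  rw [rpow_eq_mul_rpow_sub_one (by linarith) (abs_nonneg (s - r))]
  rcases le_total r s with h | h
  · rw [abs_of_nonneg (by linarith)]
    exact mul_le_mul_of_nonneg_right
      (rpow_sub_le_sub_rpow (by linarith) (by linarith) hr h) (by linarith)
  · rw [abs_of_nonpos (by linarith), neg_sub]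
    have h2 := mul_le_mul_of_nonneg_right
      (rpow_sub_le_sub_rpow (k := p - 1) (by linarith) (by linarith) hs h) (sub_nonneg.2 h)
    linarith

lemma powGap_le_sq {p r s : ℝ} (hp : 2 < p) (hr : 0 ≤ r) (hs : 0 ≤ s) :
    powGap p r s ≤ p * (p - 1) * ((s - r) ^ 2 * (r + s) ^ (p - 2)) := by
  have key : ∀ a b : ℝ, 0 ≤ b → b ≤ a →
      (a ^ (p - 1) - b ^ (p - 1)) * (a - b) ≤ (p - 1) * ((a - b) ^ 2 * (b + a) ^ (p - 2)) := by
    intro a b hb hba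
    have h := rpow_tangent_le (p := p - 1) (by linarith) hb (hb.trans hba)
    rw [show p - 1 - 1 = p - 2 by ring] at h
    have h1 : a ^ (p - 2) ≤ (b + a) ^ (p - 2) :=
      Real.rpow_le_rpow (hb.trans hba) (by linarith) (by linarith)
    have h2 : a ^ (p - 1) - b ^ (p - 1) ≤ (p - 1) * (b + a) ^ (p - 2) * (a - b) := by
      have := mul_le_mul_of_nonneg_left h1
        (mul_nonneg (show 0 ≤ p - 1 by linarith) (sub_nonneg.2 hba))
      linarith
    have := mul_le_mul_of_nonneg_right h2 (sub_nonneg.2 hba)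
    linarith
  refine (powGap_le (by linarith) hr hs).trans ?_
  rw [mul_assoc]
  refine mul_le_mul_of_nonneg_left ?_ (by linarith)
  rcases le_total r s with h | h
  · exact key s r hr h
  · have := key r s hs h
    rw [add_comm r s]
    linarith

lemma sq_le_powGap {p r s : ℝ} (hp : 1 < p) (hp' : p < 2) (hr : 0 ≤ r) (hs : 0 ≤ s) :
    p * (p - 1) / 4 * ((s - r) ^ 2 * (r + s) ^ (p - 2)) ≤ powGap p r s := by
  rcases hr.eq_or_lt with rfl | hr0
  · have hpow : s ^ p = s ^ 2 * s ^ (p - 2) := rpow_eq_sq_mul_rpow_sub_two (by linarith) hs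
    have : 0 ≤ s ^ 2 * s ^ (p - 2) := by positivity
    simp only [powGap, sub_zero, zero_add, Real.zero_rpow (show p ≠ 0 by linarith),
      Real.zero_rpow (show p - 1 ≠ 0 by linarith), mul_zero, zero_mul, hpow]
    exact mul_le_of_le_one_left this (by nlinarith)
  have key : ∀ a b : ℝ, 0 ≤ b → b ≤ a → 0 < a → a ≤ r + s →
      (p - 1) * (r + s) ^ (p - 2) * (a - b) ≤ a ^ (p - 1) - b ^ (p - 1) := by
    intro a b hb hba ha hars
    have h := rpow_le_tangent (θ := p - 1) (by linarith) (by linarith) hb ha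
    rw [show p - 1 - 1 = p - 2 by ring] at h
    have h1 : (r + s) ^ (p - 2) ≤ a ^ (p - 2) :=
      Real.rpow_le_rpow_of_nonpos ha hars (by linarith)
    have := mul_le_mul_of_nonneg_left h1
        (mul_nonneg (show 0 ≤ p - 1 by linarith) (sub_nonneg.2 hba))
    linarith
  refine le_trans ?_ (le_powGap hp hr hs)
  rw [mul_assoc p, mul_div_assoc, mul_assoc p]
  refine mul_le_mul_of_nonneg_left ?_ (by linarith)
  rcases le_total r s with h | h
  · have := mul_le_mul_of_nonneg_right
      (key ((r + s) / 2) r hr (by linarith) (by linarith) (by linarith))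
      (show 0 ≤ (r + s) / 2 - r by linarith)
    linarith
  · have := mul_le_mul_of_nonneg_right
      (key r ((r + s) / 2) (by linarith) (by linarith) (by linarith) (by linarith))
      (show 0 ≤ r - (r + s) / 2 by linarith)
    linarith

section Bregman

variable {E : Type*} [NormedAddCommGroup E] [InnerProductSpace ℝ E]

/-- The Bregman divergence of `x ↦ ‖x‖ ^ p` in a real inner product space. -/
def normPowGap (p : ℝ) (x y : E) : ℝ :=
  ‖y‖ ^ p - ‖x‖ ^ p - p * ‖x‖ ^ (p - 2) * inner ℝ x (y - x)

lemma normPowGap_eq {p : ℝ} (hp : 1 < p) (x y : E) :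
    normPowGap p x y = powGap p ‖x‖ ‖y‖
      + p / 2 * ‖x‖ ^ (p - 2) * (‖y - x‖ ^ 2 - (‖y‖ - ‖x‖) ^ 2) := by
  rcases eq_or_ne x 0 with rfl | hx
  · simp [normPowGap, powGap, Real.zero_rpow (show p - 1 ≠ 0 by linarith)]
  · have hx' : 0 < ‖x‖ := norm_pos_iff.2 hx
    have e : ‖x‖ ^ (p - 1) = ‖x‖ ^ (p - 2) * ‖x‖ := by
      rw [← Real.rpow_add_one hx'.ne']; congr 1; ring
    rw [norm_sub_sq_real, normPowGap, powGap, e, inner_sub_right, real_inner_self_eq_norm_sq,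
      real_inner_comm]
    ring

lemma sq_norm_sub_sub_sq_nonneg {E : Type*} [SeminormedAddCommGroup E] (x y : E) :
    0 ≤ ‖y - x‖ ^ 2 - (‖y‖ - ‖x‖) ^ 2 := by
  have := sq_le_sq' (by linarith [abs_le.1 (abs_norm_sub_norm_le y x)])
    (abs_le.1 (abs_norm_sub_norm_le y x)).2
  linarith

lemma sq_norm_sub_sub_sq_le {E : Type*} [SeminormedAddCommGroup E] (x y : E) :
    ‖y - x‖ ^ 2 - (‖y‖ - ‖x‖) ^ 2 ≤ 4 * (‖x‖ * ‖y‖) := by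
  have := pow_le_pow_left₀ (norm_nonneg _) (norm_sub_le y x) 2
  nlinarith

lemma exists_mul_rpow_le_normPowGap {p : ℝ} (hp : 2 ≤ p) :
    ∃ c : ℝ, 0 < c ∧ ∀ x y : E, c * ‖y - x‖ ^ p ≤ normPowGap p x y := by
  refine ⟨min (p / 2 ^ p / 2 ^ p) (p / 4 / 7 ^ (p - 2)), lt_min (by positivity) (by positivity),
    fun x y => ?_⟩
  have hE0 := sq_norm_sub_sub_sq_nonneg x y
  have hE1 := sq_norm_sub_sub_sq_le x y
  have hd := norm_sub_le y x
  have h1 := abs_sub_rpow_le_powGap hp (norm_nonneg x) (norm_nonneg y)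
  rw [normPowGap_eq (by linarith)]
  have hdp : 0 ≤ ‖y - x‖ ^ p := by positivity
  set r := ‖x‖
  set s := ‖y‖
  set d := ‖y - x‖
  have hr : 0 ≤ r := norm_nonneg x
  have hs : 0 ≤ s := norm_nonneg y
  have hd0 : 0 ≤ d := norm_nonneg _
  by_cases hc : d ^ 2 - (s - r) ^ 2 ≤ (s - r) ^ 2
  · have h2 : d ≤ 2 * |s - r| := by
      refine abs_le_of_sq_le_sq' ?_ (by positivity) |>.2
      rw [mul_pow, sq_abs]; nlinarith [sq_nonneg (s - r)]
    have h3 : d ^ p ≤ 2 ^ p * |s - r| ^ p := by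
      rw [← Real.mul_rpow (by norm_num) (abs_nonneg _)]
      exact Real.rpow_le_rpow hd0 h2 (by linarith)
    calc _ ≤ p / 2 ^ p / 2 ^ p * d ^ p := mul_le_mul_of_nonneg_right (min_le_left _ _) hdp
      _ ≤ p / 2 ^ p / 2 ^ p * (2 ^ p * |s - r| ^ p) := by gcongr
      _ = p / 2 ^ p * |s - r| ^ p := by field_simp
      _ ≤ powGap p r s := h1
      _ ≤ _ := le_add_of_nonneg_right (by positivity)
  · push Not at hc
    have h2 : s ≤ 6 * r := by nlinarith
    have h3 : d ^ (p - 2) ≤ 7 ^ (p - 2) * r ^ (p - 2) := by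
      rw [← Real.mul_rpow (by norm_num) hr]
      exact Real.rpow_le_rpow hd0 (by linarith) (by linarith)
    have h4 : d ^ 2 ≤ 2 * (d ^ 2 - (s - r) ^ 2) := by linarith
    have h5 : 0 ≤ powGap p r s := le_trans (by positivity) h1
    calc _ ≤ p / 4 / 7 ^ (p - 2) * d ^ p := mul_le_mul_of_nonneg_right (min_le_right _ _) hdp
      _ = p / 4 / 7 ^ (p - 2) * (d ^ 2 * d ^ (p - 2)) := by
        rw [← rpow_eq_sq_mul_rpow_sub_two (by linarith) hd0]
      _ ≤ p / 4 / 7 ^ (p - 2) * ((2 * (d ^ 2 - (s - r) ^ 2)) * (7 ^ (p - 2) * r ^ (p - 2))) := by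
        gcongr
      _ = p / 2 * r ^ (p - 2) * (d ^ 2 - (s - r) ^ 2) := by field_simp; ring
      _ ≤ _ := le_add_of_nonneg_left h5

lemma exists_normPowGap_le_mul_rpow {p : ℝ} (hp : 1 < p) (hp' : p ≤ 2) :
    ∃ C : ℝ, 0 < C ∧ ∀ x y : E, normPowGap p x y ≤ C * ‖y - x‖ ^ p := by
  refine ⟨p + p / 2 * (5 + (1 / 4) ^ (p - 2)), by positivity, fun x y => ?_⟩
  have hE0 := sq_norm_sub_sub_sq_nonneg x y
  have hE1 := sq_norm_sub_sub_sq_le x y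
  have hd := abs_norm_sub_norm_le y x
  have h1 := powGap_le_abs_sub_rpow hp hp' (norm_nonneg x) (norm_nonneg y)
  rw [normPowGap_eq (by linarith)]
  set r := ‖x‖
  set s := ‖y‖
  set d := ‖y - x‖
  have hr : 0 ≤ r := norm_nonneg x
  have hs : 0 ≤ s := norm_nonneg y
  have hd0 : 0 ≤ d := norm_nonneg _
  have hdp : 0 ≤ d ^ p := by positivity
  have h2 : |s - r| ^ p ≤ d ^ p := Real.rpow_le_rpow (abs_nonneg _) hd (by linarith)
  have h3 : r ^ (p - 2) * (d ^ 2 - (s - r) ^ 2) ≤ (5 + (1 / 4) ^ (p - 2)) * d ^ p := by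
    rcases le_or_gt d (4 * r) with hc | hc
    · rcases hd0.eq_or_lt with h0 | h0
      · have : d ^ 2 - (s - r) ^ 2 = 0 :=
          le_antisymm (by rw [← h0]; nlinarith [sq_nonneg (s - r)]) hE0
        rw [this, mul_zero]; positivity
      · have h4 : r ^ (p - 2) ≤ (1 / 4) ^ (p - 2) * d ^ (p - 2) := by
          rw [← Real.mul_rpow (by norm_num) hd0]
          exact Real.rpow_le_rpow_of_nonpos (by linarith) (by linarith) (by linarith)
        calc _ ≤ (1 / 4) ^ (p - 2) * d ^ (p - 2) * d ^ 2 := by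
              gcongr; linarith [sq_nonneg (s - r)]
          _ = (1 / 4) ^ (p - 2) * d ^ p := by
              rw [rpow_eq_sq_mul_rpow_sub_two (p := p) (by linarith) hd0]; ring
          _ ≤ _ := by gcongr; linarith
    · have h4 : d ^ 2 - (s - r) ^ 2 ≤ 5 * (r * d) := by
        have : s ≤ d + r := by linarith [(abs_le.1 hd).2]
        nlinarith
      have h5 : r ^ (p - 2) * r = r ^ (p - 1) := by
        conv_rhs => rw [show p - 1 = p - 2 + 1 by ring]
        rw [Real.rpow_add_one' hr (by linarith)]
      calc _ ≤ r ^ (p - 2) * (5 * (r * d)) := by gcongr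
        _ = 5 * (r ^ (p - 1) * d) := by rw [← h5]; ring
        _ ≤ 5 * (d ^ (p - 1) * d) := by
            have : r ^ (p - 1) ≤ d ^ (p - 1) := Real.rpow_le_rpow hr (by linarith) (by linarith)
            gcongr
        _ = 5 * d ^ p := by rw [← rpow_eq_mul_rpow_sub_one (by linarith) hd0]
        _ ≤ _ := by
            have : (0 : ℝ) < (1 / 4) ^ (p - 2) := by positivity
            gcongr; linarith
  have h4 := mul_le_mul_of_nonneg_left h3 (show 0 ≤ p / 2 by linarith)
  have h5 := mul_le_mul_of_nonneg_left h2 (show 0 ≤ p by linarith)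
  linarith

lemma normPowGap_le_sq {p : ℝ} (hp : 2 < p) (x y : E) :
    normPowGap p x y ≤ p * (p - 1) * (‖y - x‖ ^ 2 * (‖x‖ + ‖y‖) ^ (p - 2)) := by
  have hE0 := sq_norm_sub_sub_sq_nonneg x y
  have h1 := powGap_le_sq hp (norm_nonneg x) (norm_nonneg y)
  rw [normPowGap_eq (by linarith)]
  have h2 : ‖x‖ ^ (p - 2) ≤ (‖x‖ + ‖y‖) ^ (p - 2) :=
    Real.rpow_le_rpow (norm_nonneg _) (by linarith [norm_nonneg y]) (by linarith)
  have h3 : p / 2 * ‖x‖ ^ (p - 2) * (‖y - x‖ ^ 2 - (‖y‖ - ‖x‖) ^ 2)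
      ≤ p * (p - 1) * (‖x‖ + ‖y‖) ^ (p - 2) * (‖y - x‖ ^ 2 - (‖y‖ - ‖x‖) ^ 2) := by
    have : p / 2 ≤ p * (p - 1) := by nlinarith
    have : 0 ≤ p * (p - 1) := by nlinarith
    gcongr
  linarith

lemma sq_le_normPowGap {p : ℝ} (hp : 1 < p) (hp' : p < 2) (x y : E) :
    p * (p - 1) / 4 * (‖y - x‖ ^ 2 * (‖x‖ + ‖y‖) ^ (p - 2)) ≤ normPowGap p x y := by
  have hE0 := sq_norm_sub_sub_sq_nonneg x y
  have h1 := sq_le_powGap hp hp' (norm_nonneg x) (norm_nonneg y)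
  rw [normPowGap_eq (by linarith)]
  have h3 : p * (p - 1) / 4 * (‖x‖ + ‖y‖) ^ (p - 2) * (‖y - x‖ ^ 2 - (‖y‖ - ‖x‖) ^ 2)
      ≤ p / 2 * ‖x‖ ^ (p - 2) * (‖y - x‖ ^ 2 - (‖y‖ - ‖x‖) ^ 2) := by
    rcases eq_or_ne x 0 with rfl | hx
    · simp
    have hx' : 0 < ‖x‖ := norm_pos_iff.2 hx
    have h2 : (‖x‖ + ‖y‖) ^ (p - 2) ≤ ‖x‖ ^ (p - 2) :=
      Real.rpow_le_rpow_of_nonpos hx' (by linarith [norm_nonneg y]) (by linarith)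
    have : p * (p - 1) / 4 ≤ p / 2 := by nlinarith
    gcongr
  linarith

/-- The gap in Jensen's inequality for `x ↦ ‖x‖ ^ p` and two points. -/
def jensenGap (p t : ℝ) (x y : E) : ℝ :=
  (1 - t) * ‖y‖ ^ p + t * ‖x‖ ^ p - ‖t • x + (1 - t) • y‖ ^ p

lemma jensenGap_eq (p t : ℝ) (x y : E) :
    jensenGap p t x y = (1 - t) * normPowGap p (t • x + (1 - t) • y) y
      + t * normPowGap p (t • x + (1 - t) • y) x := by
  have h : (1 - t) * inner ℝ (t • x + (1 - t) • y) (y - (t • x + (1 - t) • y))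
      + t * inner ℝ (t • x + (1 - t) • y) (x - (t • x + (1 - t) • y)) = 0 := by
    rw [← real_inner_smul_right, ← real_inner_smul_right, ← inner_add_right]
    convert inner_zero_right _ using 2
    module
  unfold normPowGap jensenGap
  linear_combination (p * ‖t • x + (1 - t) • y‖ ^ (p - 2)) * h

lemma norm_sub_convexComb_right {t : ℝ} (ht : 0 ≤ t) (x y : E) :
    ‖y - (t • x + (1 - t) • y)‖ = t * ‖y - x‖ := by
  rw [show y - (t • x + (1 - t) • y) = t • (y - x) by module, norm_smul, Real.norm_of_nonneg ht]

lemma norm_sub_convexComb_left {t : ℝ} (ht : t ≤ 1) (x y : E) :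
    ‖x - (t • x + (1 - t) • y)‖ = (1 - t) * ‖y - x‖ := by
  rw [show x - (t • x + (1 - t) • y) = (1 - t) • (x - y) by module, norm_smul,
    Real.norm_of_nonneg (by linarith), norm_sub_rev]

lemma norm_convexComb_le {t : ℝ} (ht : 0 ≤ t) (ht' : t ≤ 1) (x y : E) :
    ‖t • x + (1 - t) • y‖ ≤ ‖y‖ + ‖x‖ := by
  refine (norm_add_le _ _).trans ?_
  rw [norm_smul, norm_smul, Real.norm_of_nonneg ht, Real.norm_of_nonneg (by linarith)]
  nlinarith [norm_nonneg x, norm_nonneg y]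

lemma exists_mul_rpow_le_jensenGap {p : ℝ} (hp : 2 ≤ p) :
    ∃ c : ℝ, 0 < c ∧ ∀ (t : ℝ) (x y : E), 0 ≤ t → t ≤ 1 →
      c * (t * (1 - t) * ‖y - x‖ ^ p) ≤ jensenGap p t x y := by
  obtain ⟨c, hc, h⟩ := exists_mul_rpow_le_normPowGap (E := E) hp
  refine ⟨c * (1 / 2) ^ (p - 1), by positivity, fun t x y ht ht' => ?_⟩
  have h1t : 0 ≤ 1 - t := by linarith
  have h1 := h (t • x + (1 - t) • y) y
  have h2 := h (t • x + (1 - t) • y) x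
  rw [norm_sub_convexComb_right ht, Real.mul_rpow ht (norm_nonneg _),
    rpow_eq_mul_rpow_sub_one (by linarith) ht] at h1
  rw [norm_sub_convexComb_left ht', Real.mul_rpow h1t (norm_nonneg _),
    rpow_eq_mul_rpow_sub_one (by linarith) h1t] at h2
  have h3 : (1 / 2 : ℝ) ^ (p - 1) ≤ t ^ (p - 1) + (1 - t) ^ (p - 1) := by
    rcases le_total (1 / 2) t with ht2 | ht2
    · have := Real.rpow_le_rpow (by norm_num) ht2 (show 0 ≤ p - 1 by linarith)
      have : 0 ≤ (1 - t) ^ (p - 1) := by positivity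
      linarith
    · have := Real.rpow_le_rpow (by norm_num) (show 1 / 2 ≤ 1 - t by linarith)
        (show 0 ≤ p - 1 by linarith)
      have : 0 ≤ t ^ (p - 1) := by positivity
      linarith
  rw [jensenGap_eq]
  calc _ = c * (t * (1 - t) * ‖y - x‖ ^ p) * (1 / 2) ^ (p - 1) := by ring
    _ ≤ c * (t * (1 - t) * ‖y - x‖ ^ p) * (t ^ (p - 1) + (1 - t) ^ (p - 1)) := by gcongr
    _ = (1 - t) * (c * (t ^ (p - 1) * t * ‖y - x‖ ^ p))
        + t * (c * ((1 - t) ^ (p - 1) * (1 - t) * ‖y - x‖ ^ p)) := by ring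
    _ ≤ _ := by gcongr

lemma exists_jensenGap_le_mul_rpow {p : ℝ} (hp : 1 < p) (hp' : p ≤ 2) :
    ∃ C : ℝ, 0 < C ∧ ∀ (t : ℝ) (x y : E), 0 ≤ t → t ≤ 1 →
      jensenGap p t x y ≤ C * (t * (1 - t) * ‖y - x‖ ^ p) := by
  obtain ⟨C, hC, h⟩ := exists_normPowGap_le_mul_rpow (E := E) hp hp'
  refine ⟨C * 2, by positivity, fun t x y ht ht' => ?_⟩
  have h1t : 0 ≤ 1 - t := by linarith
  have h1 := h (t • x + (1 - t) • y) y
  have h2 := h (t • x + (1 - t) • y) x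
  rw [norm_sub_convexComb_right ht, Real.mul_rpow ht (norm_nonneg _),
    rpow_eq_mul_rpow_sub_one (by linarith) ht] at h1
  rw [norm_sub_convexComb_left ht', Real.mul_rpow h1t (norm_nonneg _),
    rpow_eq_mul_rpow_sub_one (by linarith) h1t] at h2
  have h3 : t ^ (p - 1) + (1 - t) ^ (p - 1) ≤ 2 := by
    have := Real.rpow_le_one ht ht' (show 0 ≤ p - 1 by linarith)
    have := Real.rpow_le_one h1t (by linarith) (show 0 ≤ p - 1 by linarith)
    linarith
  rw [jensenGap_eq]
  calc _ ≤ (1 - t) * (C * (t ^ (p - 1) * t * ‖y - x‖ ^ p))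
        + t * (C * ((1 - t) ^ (p - 1) * (1 - t) * ‖y - x‖ ^ p)) := by gcongr
    _ = C * (t * (1 - t) * ‖y - x‖ ^ p) * (t ^ (p - 1) + (1 - t) ^ (p - 1)) := by ring
    _ ≤ C * (t * (1 - t) * ‖y - x‖ ^ p) * 2 := by gcongr
    _ = _ := by ring

lemma exists_jensenGap_le_sq {p : ℝ} (hp : 2 < p) :
    ∃ C : ℝ, 0 < C ∧ ∀ (t : ℝ) (x y : E), 0 ≤ t → t ≤ 1 →
      jensenGap p t x y ≤ C * (t * (1 - t) * (‖y - x‖ ^ 2 * (‖y‖ + ‖x‖) ^ (p - 2))) := by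
  have hpp : 0 < p * (p - 1) := by nlinarith
  refine ⟨p * (p - 1) * 2 ^ (p - 2), by positivity, fun t x y ht ht' => ?_⟩
  have h1t : 0 ≤ 1 - t := by linarith
  have hm := norm_convexComb_le ht ht' x y
  have h1 := normPowGap_le_sq hp (t • x + (1 - t) • y) y
  have h2 := normPowGap_le_sq hp (t • x + (1 - t) • y) x
  rw [norm_sub_convexComb_right ht] at h1
  rw [norm_sub_convexComb_left ht'] at h2
  have key : ∀ z : ℝ, 0 ≤ z → z ≤ ‖y‖ + ‖x‖ →
      (‖t • x + (1 - t) • y‖ + z) ^ (p - 2) ≤ 2 ^ (p - 2) * (‖y‖ + ‖x‖) ^ (p - 2) := by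
    intro z hz hz'
    rw [← Real.mul_rpow (by norm_num) (by positivity)]
    exact Real.rpow_le_rpow (by positivity) (by linarith) (by linarith)
  have k1 := key ‖y‖ (norm_nonneg _) (by linarith [norm_nonneg x])
  have k2 := key ‖x‖ (norm_nonneg _) (by linarith [norm_nonneg y])
  rw [jensenGap_eq]
  calc _ ≤ (1 - t) * (p * (p - 1) * ((t * ‖y - x‖) ^ 2 * (2 ^ (p - 2) * (‖y‖ + ‖x‖) ^ (p - 2))))
        + t * (p * (p - 1) * (((1 - t) * ‖y - x‖) ^ 2 * (2 ^ (p - 2) * (‖y‖ + ‖x‖) ^ (p - 2)))) := by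
        refine add_le_add (mul_le_mul_of_nonneg_left (h1.trans ?_) h1t)
          (mul_le_mul_of_nonneg_left (h2.trans ?_) ht) <;> gcongr
    _ = _ := by ring

lemma exists_sq_le_jensenGap {p : ℝ} (hp : 1 < p) (hp' : p < 2) :
    ∃ c : ℝ, 0 < c ∧ ∀ (t : ℝ) (x y : E), 0 ≤ t → t ≤ 1 →
      c * (t * (1 - t) * (‖y - x‖ ^ 2 * (‖y‖ + ‖x‖) ^ (p - 2))) ≤ jensenGap p t x y := by
  have hpp : 0 < p * (p - 1) := by nlinarith
  refine ⟨p * (p - 1) / 4 * 2 ^ (p - 2), by positivity, fun t x y ht ht' => ?_⟩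
  have h1t : 0 ≤ 1 - t := by linarith
  have hm := norm_convexComb_le ht ht' x y
  have h1 := sq_le_normPowGap hp hp' (t • x + (1 - t) • y) y
  have h2 := sq_le_normPowGap hp hp' (t • x + (1 - t) • y) x
  rw [norm_sub_convexComb_right ht] at h1
  rw [norm_sub_convexComb_left ht'] at h2
  have key : ∀ z d : ℝ, 0 ≤ z → z ≤ ‖y‖ + ‖x‖ → 0 ≤ d → d ≤ ‖t • x + (1 - t) • y‖ + z →
      d ^ 2 * (2 ^ (p - 2) * (‖y‖ + ‖x‖) ^ (p - 2))
        ≤ d ^ 2 * (‖t • x + (1 - t) • y‖ + z) ^ (p - 2) := by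
    intro z d hz hz' hd hd'
    rcases hd.eq_or_lt with rfl | hd
    · simp
    rw [← Real.mul_rpow (by norm_num) (by positivity)]
    exact mul_le_mul_of_nonneg_left
      (Real.rpow_le_rpow_of_nonpos (by linarith) (by linarith) (by linarith)) (by positivity)
  have k1 := key ‖y‖ (t * ‖y - x‖) (norm_nonneg _) (by linarith [norm_nonneg x]) (by positivity)
    ((norm_sub_convexComb_right ht x y).symm.trans_le ((norm_sub_le _ _).trans_eq (add_comm _ _)))
  have k2 := key ‖x‖ ((1 - t) * ‖y - x‖) (norm_nonneg _) (by linarith [norm_nonneg y])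
    (by positivity)
    ((norm_sub_convexComb_left ht' x y).symm.trans_le ((norm_sub_le _ _).trans_eq (add_comm _ _)))
  rw [jensenGap_eq]
  calc _ = (1 - t) * (p * (p - 1) / 4 *
          ((t * ‖y - x‖) ^ 2 * (2 ^ (p - 2) * (‖y‖ + ‖x‖) ^ (p - 2))))
        + t * (p * (p - 1) / 4 *
          (((1 - t) * ‖y - x‖) ^ 2 * (2 ^ (p - 2) * (‖y‖ + ‖x‖) ^ (p - 2)))) := by ring
    _ ≤ _ := by
        refine add_le_add (mul_le_mul_of_nonneg_left (le_trans ?_ h1) h1t)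
          (mul_le_mul_of_nonneg_left (le_trans ?_ h2) ht) <;> gcongr

end Bregman

/-- The summand (without the weight) of the first-order Hardy functional, in terms of the
values `a = g n`, `b = g (n + 1)`, `z = u n`, `w = u (n + 1)`. -/
def hardyGap (p a b : ℝ) (z w : ℂ) : ℝ :=
  ‖w - z‖ ^ p + (b - a) ^ (p - 1) * (‖z‖ ^ p / a ^ (p - 1) - ‖w‖ ^ p / b ^ (p - 1))

lemma hardyGap_self {p : ℝ} (hp : 1 < p) (a : ℝ) (z w : ℂ) : hardyGap p a a z w = ‖w - z‖ ^ p := by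
  simp [hardyGap, Real.zero_rpow (show p - 1 ≠ 0 by linarith)]

lemma hardyGap_eq_jensenGap {p a b : ℝ} (hp : 1 < p) (ha : 0 < a) (hab : a < b) (z w : ℂ) :
    hardyGap p a b z w
      = (b - a) ^ (p - 1) * b * jensenGap p (a / b) (a⁻¹ • z) ((b - a)⁻¹ • (w - z)) := by
  have hb : 0 < b := ha.trans hab
  have hba : 0 < b - a := sub_pos.2 hab
  have hm : (a / b) • a⁻¹ • z + (1 - a / b) • (b - a)⁻¹ • (w - z) = b⁻¹ • w := by
    rw [smul_smul, smul_smul, show a / b * a⁻¹ = b⁻¹ by field_simp,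
      show (1 - a / b) * (b - a)⁻¹ = b⁻¹ by field_simp]
    module
  have hpow : ∀ (c : ℝ) (v : ℂ), 0 < c → ‖c⁻¹ • v‖ ^ p = ‖v‖ ^ p / (c ^ (p - 1) * c) := by
    intro c v hc
    rw [norm_smul, Real.norm_of_nonneg (inv_nonneg.2 hc.le), inv_mul_eq_div,
      Real.div_rpow (norm_nonneg _) hc.le, rpow_eq_mul_rpow_sub_one (a := c) (by linarith) hc.le]
  rw [jensenGap, hm, hpow _ _ ha, hpow _ _ hb, hpow _ _ hba, hardyGap]
  have := Real.rpow_pos_of_pos ha (p - 1)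
  have := Real.rpow_pos_of_pos hb (p - 1)
  have := Real.rpow_pos_of_pos hba (p - 1)
  field_simp
  ring

lemma rpow_mul_jensen_weight {p a b : ℝ} (hp : 1 < p) (ha : 0 < a) (hab : a < b) (c X : ℝ) :
    (b - a) ^ (p - 1) * b * (c * (a / b * (1 - a / b) * X)) = c * (a / b * (b - a) ^ p * X) := by
  have hb : 0 < b := ha.trans hab
  rw [rpow_eq_mul_rpow_sub_one (a := b - a) (p := p) (by linarith) (by linarith)]
  field_simp

lemma norm_sqrt_mul_sub {a b : ℝ} (ha : 0 < a) (hab : a < b) (z w : ℂ) :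
    ‖(Real.sqrt (a / b) : ℂ) * w - (Real.sqrt (b / a) : ℂ) * z‖
      = Real.sqrt (a / b) * ((b - a) * ‖(b - a)⁻¹ • (w - z) - a⁻¹ • z‖) := by
  have hb : 0 < b := ha.trans hab
  have hba : 0 < b - a := sub_pos.2 hab
  have hs : Real.sqrt (b / a) = Real.sqrt (a / b) * (b / a) := by
    rw [Real.sqrt_eq_iff_eq_sq (by positivity) (by positivity), mul_pow,
      Real.sq_sqrt (by positivity)]
    field_simp
  have hv : (Real.sqrt (a / b) : ℂ) * w - (Real.sqrt (b / a) : ℂ) * z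
      = Real.sqrt (a / b) • (b - a) • ((b - a)⁻¹ • (w - z) - a⁻¹ • z) := by
    rw [smul_sub (b - a), smul_inv_smul₀ hba.ne', smul_smul, hs]
    simp only [Complex.real_smul]
    have : (a : ℂ) ≠ 0 := by exact_mod_cast ha.ne'
    push_cast
    field_simp
    ring
  rw [hv, norm_smul, norm_smul, Real.norm_of_nonneg (Real.sqrt_nonneg _),
    Real.norm_of_nonneg hba.le]

section Remainder

variable {p s : ℝ} {g : ℤ → ℝ} {n : ℤ}

lemma Rem_of_eq (hp : 1 < p) (u : ℤ → ℂ) (hg : 0 < g n) (h : g n = g (n + 1)) :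
    Rem p s g u n = ‖u (n + 1) - u n‖ ^ p := by
  have hg' : g (n + 1) ≠ 0 := by rw [← h]; exact hg.ne'
  rw [rpow_eq_sq_mul_rpow_sub_two (p := p) (by linarith) (norm_nonneg (u (n + 1) - u n))]
  unfold Rem
  split_ifs
  · rw [← rpow_eq_sq_mul_rpow_sub_two (by linarith) (norm_nonneg _)]
    simp [h, hg']
  · simp [h, hg', rdiv, ddiv]

lemma Rem_of_le_two (hs : s ≤ 2) (u : ℤ → ℂ) (hg : 0 < g n) (h : g n < g (n + 1)) :
    Rem p s g u n = (g n / g (n + 1)) ^ (p / 2) * (g (n + 1) - g n) ^ p *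
      ‖(g (n + 1) - g n)⁻¹ • (u (n + 1) - u n) - (g n)⁻¹ • u n‖ ^ p := by
  have hg' : 0 < g (n + 1) := hg.trans h
  have hba : 0 < g (n + 1) - g n := sub_pos.2 h
  rw [Rem, if_pos hs, norm_sqrt_mul_sub hg h, Real.mul_rpow (by positivity) (by positivity),
    Real.mul_rpow hba.le (norm_nonneg _), Real.sqrt_eq_rpow, ← Real.rpow_mul (by positivity),
    one_div_mul_eq_div, mul_assoc]

lemma Rem_of_two_lt (hp : 1 < p) (hs : 2 < s) (u : ℤ → ℂ) (hg : 0 < g n) (h : g n < g (n + 1)) :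
    Rem p s g u n = g n / g (n + 1) * (g (n + 1) - g n) ^ p *
      (‖(g (n + 1) - g n)⁻¹ • (u (n + 1) - u n) - (g n)⁻¹ • u n‖ ^ 2 *
        (‖(g (n + 1) - g n)⁻¹ • (u (n + 1) - u n)‖ + ‖(g n)⁻¹ • u n‖) ^ (p - 2)) := by
  have hg' : 0 < g (n + 1) := hg.trans h
  have hba : 0 < g (n + 1) - g n := sub_pos.2 h
  have hsum : ‖ddiv u n‖ + ‖u n‖ / g n * rdiv g n = (g (n + 1) - g n) *
      (‖(g (n + 1) - g n)⁻¹ • (u (n + 1) - u n)‖ + ‖(g n)⁻¹ • u n‖) := by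
    rw [norm_smul, norm_smul, Real.norm_of_nonneg (inv_nonneg.2 hba.le),
      Real.norm_of_nonneg (inv_nonneg.2 hg.le), ddiv, rdiv]
    field_simp
  rw [Rem, if_neg hs.not_ge, norm_sqrt_mul_sub hg h, hsum,
    Real.mul_rpow hba.le (add_nonneg (norm_nonneg _) (norm_nonneg _)),
    rpow_eq_sq_mul_rpow_sub_two (p := p) (by linarith) hba.le, Real.rpow_two, mul_pow, mul_pow,
    Real.sq_sqrt (by positivity)]
  ring

end Remainder

lemma exists_Rem_le_hardyGap {p q : ℝ} (hp : 1 < p) (hpq : q ≤ 2 ↔ 2 ≤ p) :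
    ∃ c : ℝ, 0 < c ∧ ∀ (g : ℤ → ℝ) (u : ℤ → ℂ) (n : ℤ), 0 < g n → g n ≤ g (n + 1) →
      c * Rem p q g u n ≤ hardyGap p (g n) (g (n + 1)) (u n) (u (n + 1)) := by
  suffices ∃ c : ℝ, 0 < c ∧ ∀ (g : ℤ → ℝ) (u : ℤ → ℂ) (n : ℤ), 0 < g n → g n < g (n + 1) →
      c * Rem p q g u n ≤ hardyGap p (g n) (g (n + 1)) (u n) (u (n + 1)) by
    obtain ⟨c, hc, h⟩ := this
    refine ⟨min c 1, lt_min hc one_pos, fun g u n hg hle => ?_⟩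
    rcases hle.eq_or_lt with he | hlt
    · rw [Rem_of_eq hp u hg he, ← he, hardyGap_self hp]
      exact mul_le_of_le_one_left (by positivity) (min_le_right _ _)
    · refine le_trans (mul_le_mul_of_nonneg_right (min_le_left _ _) ?_) (h g u n hg hlt)
      have hba : 0 < g (n + 1) - g n := sub_pos.2 hlt
      have hg' : 0 < g (n + 1) := hg.trans hlt
      rcases le_or_gt q 2 with hq | hq
      · rw [Rem_of_le_two hq u hg hlt]; positivity
      · rw [Rem_of_two_lt hp hq u hg hlt]; positivity
  rcases le_or_gt q 2 with hq | hq
  · have hp2 := hpq.1 hq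
    obtain ⟨c, hc, h⟩ := exists_mul_rpow_le_jensenGap (E := ℂ) hp2
    refine ⟨c, hc, fun g u n hg hlt => ?_⟩
    have hba : 0 < g (n + 1) - g n := sub_pos.2 hlt
    have hg' : 0 < g (n + 1) := hg.trans hlt
    have ht : g n / g (n + 1) ≤ 1 := (div_le_one hg').2 hlt.le
    have hpow : (g n / g (n + 1)) ^ (p / 2) ≤ g n / g (n + 1) :=
      Real.rpow_le_self_of_le_one (by positivity) ht (by linarith)
    rw [Rem_of_le_two hq u hg hlt, hardyGap_eq_jensenGap hp hg hlt]
    refine le_trans ?_ (mul_le_mul_of_nonneg_left (h _ _ _ (by positivity) ht) (by positivity))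
    rw [rpow_mul_jensen_weight hp hg hlt]
    gcongr
  · have hp2 : p < 2 := not_le.1 (mt hpq.2 hq.not_ge)
    obtain ⟨c, hc, h⟩ := exists_sq_le_jensenGap (E := ℂ) hp hp2
    refine ⟨c, hc, fun g u n hg hlt => ?_⟩
    have hba : 0 < g (n + 1) - g n := sub_pos.2 hlt
    have hg' : 0 < g (n + 1) := hg.trans hlt
    have ht : g n / g (n + 1) ≤ 1 := (div_le_one hg').2 hlt.le
    rw [Rem_of_two_lt hp hq u hg hlt, hardyGap_eq_jensenGap hp hg hlt,
      ← rpow_mul_jensen_weight hp hg hlt]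
    exact mul_le_mul_of_nonneg_left (h _ _ _ (by positivity) ht) (by positivity)

lemma exists_hardyGap_le_Rem {p : ℝ} (hp : 1 < p) :
    ∃ C : ℝ, 0 < C ∧ ∀ (g : ℤ → ℝ) (u : ℤ → ℂ) (n : ℤ), 0 < g n → g n ≤ g (n + 1) →
      hardyGap p (g n) (g (n + 1)) (u n) (u (n + 1)) ≤ C * Rem p p g u n := by
  suffices ∃ C : ℝ, 0 < C ∧ ∀ (g : ℤ → ℝ) (u : ℤ → ℂ) (n : ℤ), 0 < g n → g n < g (n + 1) →
      hardyGap p (g n) (g (n + 1)) (u n) (u (n + 1)) ≤ C * Rem p p g u n by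
    obtain ⟨C, hC, h⟩ := this
    refine ⟨max C 1, lt_max_of_lt_left hC, fun g u n hg hle => ?_⟩
    rcases hle.eq_or_lt with he | hlt
    · rw [Rem_of_eq hp u hg he, ← he, hardyGap_self hp]
      exact le_mul_of_one_le_left (by positivity) (le_max_right _ _)
    · refine (h g u n hg hlt).trans (mul_le_mul_of_nonneg_right (le_max_left _ _) ?_)
      have hba : 0 < g (n + 1) - g n := sub_pos.2 hlt
      have hg' : 0 < g (n + 1) := hg.trans hlt
      rcases le_or_gt p 2 with hp2 | hp2
      · rw [Rem_of_le_two hp2 u hg hlt]; positivity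
      · rw [Rem_of_two_lt hp hp2 u hg hlt]; positivity
  rcases le_or_gt p 2 with hp2 | hp2
  · obtain ⟨C, hC, h⟩ := exists_jensenGap_le_mul_rpow (E := ℂ) hp hp2
    refine ⟨C, hC, fun g u n hg hlt => ?_⟩
    have hba : 0 < g (n + 1) - g n := sub_pos.2 hlt
    have hg' : 0 < g (n + 1) := hg.trans hlt
    have ht : g n / g (n + 1) ≤ 1 := (div_le_one hg').2 hlt.le
    have hpow : g n / g (n + 1) ≤ (g n / g (n + 1)) ^ (p / 2) :=
      Real.self_le_rpow_of_le_one (by positivity) ht (by linarith)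
    rw [Rem_of_le_two hp2 u hg hlt, hardyGap_eq_jensenGap hp hg hlt]
    refine (mul_le_mul_of_nonneg_left (h _ _ _ (by positivity) ht) (by positivity)).trans ?_
    rw [rpow_mul_jensen_weight hp hg hlt]
    gcongr
  · obtain ⟨C, hC, h⟩ := exists_jensenGap_le_sq (E := ℂ) hp2
    refine ⟨C, hC, fun g u n hg hlt => ?_⟩
    have hba : 0 < g (n + 1) - g n := sub_pos.2 hlt
    have hg' : 0 < g (n + 1) := hg.trans hlt
    have ht : g n / g (n + 1) ≤ 1 := (div_le_one hg').2 hlt.le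
    rw [Rem_of_two_lt hp hp2 u hg hlt, hardyGap_eq_jensenGap hp hg hlt,
      ← rpow_mul_jensen_weight hp hg hlt]
    exact mul_le_mul_of_nonneg_left (h _ _ _ (by positivity) ht) (by positivity)

lemma summable_shift_of_eventually_zero {f : ℤ → ℝ} {N : ℤ} (h : ∀ n, N ≤ n → f n = 0) (a : ℤ) :
    Summable fun k : ℕ => f (a + k) := by
  refine summable_of_ne_finset_zero (s := Finset.range (N - a).toNat) fun k hk => h _ ?_
  rw [Finset.mem_range] at hk
  omega

lemma hardy_sum_eq {p : ℝ} (hp : 1 < p) {V g : ℤ → ℝ} {u : ℤ → ℂ} (hg0 : g 0 = 0) (hg1 : 0 < g 1)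
    (hu0 : u 0 = 0) {N : ℤ} (hN : ∀ n, N ≤ n → u n = 0) :
    tsumFrom 1 (fun n => V n * ‖dgrad u n‖ ^ p)
      + tsumFrom 1 (fun n => (V (n + 1) * rgrad g (n + 1) ^ (p - 1)
          - V n * rgrad g n ^ (p - 1)) / g n ^ (p - 1) * ‖u n‖ ^ p)
      = tsumFrom 1 (fun n => V (n + 1) * hardyGap p (g n) (g (n + 1)) (u n) (u (n + 1))) := by
  have hp0 : p ≠ 0 := by linarith
  let P : ℤ → ℝ := fun n =>
    V n * ‖dgrad u n‖ ^ p - V n * rgrad g n ^ (p - 1) / g n ^ (p - 1) * ‖u n‖ ^ p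
  let Q : ℤ → ℝ := fun n => V (n + 1) * rgrad g (n + 1) ^ (p - 1) / g n ^ (p - 1) * ‖u n‖ ^ p
  have hP0 : ∀ n, N + 1 ≤ n → P n = 0 := fun n hn => by
    simp [P, dgrad, hN n (by omega), hN (n - 1) (by omega), hp0]
  have hQ0 : ∀ n, N ≤ n → Q n = 0 := fun n hn => by simp [Q, hN n hn, hp0]
  have hP := summable_shift_of_eventually_zero hP0 1
  have hQ := summable_shift_of_eventually_zero hQ0 1
  have hP1 : P 1 = 0 := by
    have : g 1 ^ (p - 1) ≠ 0 := (Real.rpow_pos_of_pos hg1 _).ne'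
    simp [P, dgrad, rgrad, hg0, hu0, this]
  have hA : Summable fun k : ℕ => V (1 + k) * ‖dgrad u (1 + k)‖ ^ p :=
    summable_shift_of_eventually_zero (f := fun n => V n * ‖dgrad u n‖ ^ p) (N := N + 1)
      (fun n hn => by simp [dgrad, hN n (by omega), hN (n - 1) (by omega), hp0]) 1
  have hB : Summable fun k : ℕ => (V (1 + k + 1) * rgrad g (1 + k + 1) ^ (p - 1)
      - V (1 + k) * rgrad g (1 + k) ^ (p - 1)) / g (1 + k) ^ (p - 1) * ‖u (1 + k)‖ ^ p :=
    summable_shift_of_eventually_zero (f := fun n => (V (n + 1) * rgrad g (n + 1) ^ (p - 1)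
      - V n * rgrad g n ^ (p - 1)) / g n ^ (p - 1) * ‖u n‖ ^ p)
      (N := N) (fun n hn => by simp [hN n hn, hp0]) 1
  unfold tsumFrom
  rw [← hA.tsum_add hB]
  calc _ = ∑' k : ℕ, (P (1 + k) + Q (1 + k)) := by
        refine tsum_congr fun k => ?_
        simp only [P, Q]
        ring
    _ = ∑' k : ℕ, P (1 + (k + 1 : ℕ)) + ∑' k : ℕ, Q (1 + k) := by
        rw [hP.tsum_add hQ, hP.tsum_eq_zero_add]
        simp [hP1]
    _ = ∑' k : ℕ, (P (1 + (k + 1 : ℕ)) + Q (1 + k)) :=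
        (((summable_nat_add_iff 1).2 hP).tsum_add hQ).symm
    _ = _ := by
        refine tsum_congr fun k => ?_
        rw [show (1 : ℤ) + (k + 1 : ℕ) = 1 + k + 1 by push_cast; ring]
        simp only [P, Q, hardyGap, dgrad, rgrad, add_sub_cancel_right]
        ring

/-- Theorem 2.1, weighted abstract first-order `p`-Hardy inequality.
There are constants `c, C > 0`, depending only on `p`, such that for every nonnegative
weight `V`, every `𝔤 ∈ H^1` with `𝔤_{n+1} ≥ 𝔤_n > 0` for `n ≥ 1`, and every `u ∈ H_0^1`,
`c ∑_{n≥1} V_{n+1} R(q;𝔤,u)_n ≤ ∑_{n≥1} V_n |∇u_n|^p + ∑_{n≥1} (div(V (∇𝔤)^{p-1})_n / 𝔤_n^{p-1}) |u_n|^p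
  ≤ C ∑_{n≥1} V_{n+1} R(p;𝔤,u)_n`. -/
theorem stmt_0 (p q : ℝ) (hp : 1 < p) (hpq : 1 / p + 1 / q = 1) :
    ∃ c C : ℝ, 0 < c ∧ 0 < C ∧
      ∀ (V g : ℤ → ℝ) (u : ℤ → ℂ),
        (∀ n : ℤ, 1 ≤ n → 0 ≤ V n) →
        (∀ n : ℤ, n < 1 → g n = 0) →
        (∀ n : ℤ, 1 ≤ n → 0 < g n ∧ g n ≤ g (n + 1)) →
        (∀ n : ℤ, n < 1 → u n = 0) →
        (Function.support u).Finite →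
          c * tsumFrom 1 (fun n => V (n + 1) * Rem p q g u n)
              ≤ tsumFrom 1 (fun n => V n * ‖dgrad u n‖ ^ p)
                + tsumFrom 1 (fun n =>
                    (V (n + 1) * rgrad g (n + 1) ^ (p - 1)
                        - V n * rgrad g n ^ (p - 1)) / g n ^ (p - 1) * ‖u n‖ ^ p)
            ∧ tsumFrom 1 (fun n => V n * ‖dgrad u n‖ ^ p)
                + tsumFrom 1 (fun n =>
                    (V (n + 1) * rgrad g (n + 1) ^ (p - 1)
                        - V n * rgrad g n ^ (p - 1)) / g n ^ (p - 1) * ‖u n‖ ^ p)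
              ≤ C * tsumFrom 1 (fun n => V (n + 1) * Rem p p g u n) := by
  have hq2 : q ≤ 2 ↔ 2 ≤ p := by
    have hq : q ≠ 0 := by
      rintro rfl
      rw [div_zero, add_zero, div_eq_one_iff_eq (by linarith)] at hpq
      linarith
    have hmul : (p - 1) * q = p := by
      field_simp at hpq
      linarith
    constructor <;> intro h <;> nlinarith
  obtain ⟨c, hc, hlow⟩ := exists_Rem_le_hardyGap hp hq2
  obtain ⟨C, hC, hup⟩ := exists_hardyGap_le_Rem hp
  refine ⟨c, C, hc, hC, fun V g u hV hg0 hg hu0 hfin => ?_⟩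
  obtain ⟨M, hM⟩ := hfin.bddAbove
  have hN : ∀ n, M + 1 ≤ n → u n = 0 := fun n hn => by
    by_contra hne
    have := hM (Function.mem_support.2 hne)
    omega
  have hp0 : p ≠ 0 := by linarith
  rw [hardy_sum_eq hp (hg0 0 (by norm_num)) (hg 1 le_rfl).1 (hu0 0 (by norm_num)) hN]
  have hE : Summable fun k : ℕ =>
      V (1 + k + 1) * hardyGap p (g (1 + k)) (g (1 + k + 1)) (u (1 + k)) (u (1 + k + 1)) :=
    summable_shift_of_eventually_zero
      (f := fun n => V (n + 1) * hardyGap p (g n) (g (n + 1)) (u n) (u (n + 1)))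
      (N := M + 1) (fun n hn => by simp [hardyGap, hN n hn, hN (n + 1) (by omega), hp0]) 1
  have hR : ∀ s, Summable fun k : ℕ => V (1 + k + 1) * Rem p s g u (1 + k) := fun s =>
    summable_shift_of_eventually_zero (f := fun n => V (n + 1) * Rem p s g u n)
      (N := M + 1) (fun n hn => by simp [Rem, hN n hn, hN (n + 1) (by omega), hp0]) 1
  unfold tsumFrom
  rw [← tsum_mul_left, ← tsum_mul_left]
  refine ⟨((hR q).mul_left c).tsum_le_tsum (fun k => ?_) hE,
    hE.tsum_le_tsum (fun k => ?_) ((hR p).mul_left C)⟩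
  · obtain ⟨h1, h2⟩ := hg (1 + k) (by omega)
    rw [mul_left_comm]
    exact mul_le_mul_of_nonneg_left (hlow g u _ h1 h2) (hV _ (by omega))
  · obtain ⟨h1, h2⟩ := hg (1 + k) (by omega)
    rw [mul_left_comm C]
    exact mul_le_mul_of_nonneg_left (hup g u _ h1 h2) (hV _ (by omega))
end
end

section
/- Let p ∈ (1,2]. There exist constants c, C > 0 depending only on p such that for all t ∈ [0,1] and all z ∈ ℂ one has c·t·|z−1|^2·(|z−t| + 1 − t)^{p−2} ≤ |z−t|^p − (1−t)^{p−1}·(|z|^p − t) ≤ C·t^{p/2}·|z−1|^p, where the left-hand side is understood as 0 in the degenerate case z = t = 1. -/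
noncomputable section

open scoped InnerProductSpace

lemma hasDerivAt_rpow_sub_sq {p R : ℝ} (hp1 : 1 < p) (r : ℝ) :
    HasDerivAt (fun r : ℝ => r ^ p - p * (p - 1) / 2 * R ^ (p - 2) * r ^ 2)
      (p * r ^ (p - 1) - p * (p - 1) / 2 * R ^ (p - 2) * (2 * r)) r := by
  simpa using (Real.hasDerivAt_rpow_const (Or.inr hp1.le)).fun_sub
    ((hasDerivAt_pow 2 r).const_mul (p * (p - 1) / 2 * R ^ (p - 2)))

lemma monotoneOn_rpow_sub_sq {p R : ℝ} (hp1 : 1 < p) (hp2 : p ≤ 2) :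
    MonotoneOn (fun r : ℝ => r ^ p - p * (p - 1) / 2 * R ^ (p - 2) * r ^ 2) (Set.Icc 0 R) := by
  have hd := hasDerivAt_rpow_sub_sq (R := R) hp1
  refine monotoneOn_of_hasDerivWithinAt_nonneg (convex_Icc 0 R)
    (fun r _ => (hd r).continuousAt.continuousWithinAt)
    (fun r _ => (hd r).hasDerivWithinAt) fun r hr => ?_
  rw [interior_Icc] at hr
  have hle : R ^ (p - 2) ≤ r ^ (p - 2) :=
    Real.rpow_le_rpow_of_nonpos hr.1 hr.2.le (by linarith)
  have hr1 : r ^ (p - 1) = r ^ (p - 2) * r := by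
    rw [← Real.rpow_add_one hr.1.ne']; ring_nf
  have hpos : 0 < r ^ (p - 2) := Real.rpow_pos_of_pos hr.1 _
  have hmul : (p - 1) * R ^ (p - 2) ≤ 1 * r ^ (p - 2) := by
    refine (mul_le_mul_of_nonneg_left hle (by linarith)).trans ?_
    exact mul_le_mul_of_nonneg_right (by linarith) hpos.le
  rw [hr1]
  have := mul_nonneg (mul_nonneg (by linarith : (0 : ℝ) ≤ p) hr.1.le) (sub_nonneg.2 hmul)
  linarith

/-- The function `r ^ p` is strongly convex on `[0, R]`, with modulus `p (p - 1) R ^ (p - 2)`. -/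
lemma convexOn_rpow_sub_sq {p R : ℝ} (hp1 : 1 < p) (hp2 : p ≤ 2) :
    ConvexOn ℝ (Set.Icc 0 R)
      (fun r : ℝ => r ^ p - p * (p - 1) / 2 * R ^ (p - 2) * r ^ 2) := by
  have hd := hasDerivAt_rpow_sub_sq (R := R) hp1
  refine convexOn_of_hasDerivWithinAt2_nonneg (convex_Icc 0 R)
    (f' := fun r => p * r ^ (p - 1) - p * (p - 1) / 2 * R ^ (p - 2) * (2 * r))
    (f'' := fun r => p * ((p - 1) * r ^ (p - 2)) - p * (p - 1) / 2 * R ^ (p - 2) * 2)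
    (fun r _ => (hd r).continuousAt.continuousWithinAt)
    (fun r _ => (hd r).hasDerivWithinAt) (fun r hr => ?_) fun r hr => ?_
  · rw [interior_Icc] at hr
    have h1 := (Real.hasDerivAt_rpow_const (p := p - 1) (Or.inl hr.1.ne')).const_mul p
    have h2 := ((hasDerivAt_id r).const_mul (2 : ℝ)).const_mul (p * (p - 1) / 2 * R ^ (p - 2))
    rw [show p - 1 - 1 = p - 2 by ring] at h1
    simpa using (h1.fun_sub h2).hasDerivWithinAt
  · rw [interior_Icc] at hr
    have hle : R ^ (p - 2) ≤ r ^ (p - 2) :=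
      Real.rpow_le_rpow_of_nonpos hr.1 hr.2.le (by linarith)
    have : 0 ≤ p * (p - 1) * (r ^ (p - 2) - R ^ (p - 2)) :=
      mul_nonneg (mul_nonneg (by linarith) (by linarith)) (sub_nonneg.2 hle)
    linarith

section InnerProductSpace

variable {E : Type*} [NormedAddCommGroup E] [InnerProductSpace ℝ E]

/-- The defect of the squared norm in Jensen's inequality. -/
lemma norm_sq_convex_combination {s t : ℝ} (hst : s + t = 1) (x y : E) :
    ‖t • x + s • y‖ ^ 2 = t * ‖x‖ ^ 2 + s * ‖y‖ ^ 2 - t * s * ‖y - x‖ ^ 2 := by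
  obtain rfl : s = 1 - t := by linarith
  rw [norm_add_sq_real, norm_sub_sq_real, norm_smul, norm_smul, mul_pow, mul_pow,
    real_inner_smul_left, real_inner_smul_right, real_inner_comm y x, Real.norm_eq_abs,
    Real.norm_eq_abs, sq_abs, sq_abs]
  ring

/-- Quantitative Jensen inequality from below for `‖·‖ ^ p`, `1 < p ≤ 2`. -/
lemma norm_rpow_jensen_lower {p : ℝ} (hp1 : 1 < p) (hp2 : p ≤ 2) {s t : ℝ} (hs : 0 ≤ s)
    (ht : 0 ≤ t) (hst : s + t = 1) (x y : E) :
    p * (p - 1) / 2 * (t * s * ‖y - x‖ ^ 2 * (‖y‖ + ‖x‖) ^ (p - 2)) ≤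
      t * ‖x‖ ^ p + s * ‖y‖ ^ p - ‖t • x + s • y‖ ^ p := by
  have hx := norm_nonneg x
  have hy := norm_nonneg y
  have hxR : ‖x‖ ∈ Set.Icc 0 (‖y‖ + ‖x‖) := ⟨hx, by linarith⟩
  have hyR : ‖y‖ ∈ Set.Icc 0 (‖y‖ + ‖x‖) := ⟨hy, by linarith⟩
  have hnorm : ‖t • x + s • y‖ ≤ t * ‖x‖ + s * ‖y‖ := by
    refine (norm_add_le _ _).trans_eq ?_
    rw [norm_smul, norm_smul, Real.norm_of_nonneg ht, Real.norm_of_nonneg hs]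
  have hconv := convexOn_rpow_sub_sq (R := ‖y‖ + ‖x‖) hp1 hp2
  have hmem := hconv.1 hxR hyR ht hs (by linarith)
  have hcomb := hconv.2 hxR hyR ht hs (by linarith)
  simp only [smul_eq_mul] at hmem hcomb
  have hmono := monotoneOn_rpow_sub_sq (R := ‖y‖ + ‖x‖) hp1 hp2
    ⟨norm_nonneg _, hnorm.trans hmem.2⟩ hmem hnorm
  have h := hmono.trans hcomb
  simp only [norm_sq_convex_combination hst] at h
  linarith

/-- First-order Taylor upper bound for `‖·‖ ^ p`, `1 < p ≤ 2`, with remainder `‖h‖ ^ p`. -/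
lemma norm_add_rpow_le {p : ℝ} (hp1 : 1 < p) (hp2 : p ≤ 2) (x h : E) :
    ‖x + h‖ ^ p ≤ ‖x‖ ^ p + p * ‖x‖ ^ (p - 2) * ⟪x, h⟫_ℝ + 6 * ‖h‖ ^ p := by
  rcases eq_or_ne x 0 with rfl | hx0
  · have := Real.rpow_nonneg (norm_nonneg h) p
    simp only [zero_add, norm_zero, inner_zero_left, mul_zero, add_zero,
      Real.zero_rpow (by linarith : p ≠ 0)]
    linarith
  have hx : 0 < ‖x‖ := norm_pos_iff.2 hx0
  have hxp : 0 < ‖x‖ ^ (p - 2) := Real.rpow_pos_of_pos hx _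
  have hxmul : ‖x‖ ^ (p - 2) * ‖x‖ = ‖x‖ ^ (p - 1) := by
    rw [← Real.rpow_add_one hx.ne']; ring_nf
  have hxsq : ‖x‖ ^ (p - 2) * ‖x‖ ^ 2 = ‖x‖ ^ p := by
    rw [← Real.rpow_natCast, ← Real.rpow_add hx]; norm_num
  rcases le_or_gt ‖h‖ ‖x‖ with hle | hlt
  · have hrem : ‖x‖ ^ (p - 2) * ‖h‖ ^ 2 ≤ ‖h‖ ^ p := by
      rcases eq_or_ne h 0 with rfl | hh0
      · simp [Real.rpow_nonneg]
      have hh : 0 < ‖h‖ := norm_pos_iff.2 hh0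
      calc ‖x‖ ^ (p - 2) * ‖h‖ ^ 2 ≤ ‖h‖ ^ (p - 2) * ‖h‖ ^ 2 := by
            gcongr ?_ * _
            exact Real.rpow_le_rpow_of_nonpos hh hle (by linarith)
        _ = ‖h‖ ^ p := by
            rw [← Real.rpow_natCast, ← Real.rpow_add hh]; norm_num
    set q := ‖x + h‖ / ‖x‖ with hq
    have hq0 : 0 ≤ q := by positivity
    have hqx : ‖x + h‖ = q * ‖x‖ := by rw [hq]; field_simp
    have hbern : q ^ p ≤ 1 + p / 2 * (q ^ 2 - 1) := by
      have := rpow_one_add_le_one_add_mul_self (s := q ^ 2 - 1) (p := p / 2)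
        (by nlinarith [sq_nonneg q]) (by linarith) (by linarith)
      rwa [add_sub_cancel, ← Real.rpow_natCast_mul hq0,
        show ((2 : ℕ) : ℝ) * (p / 2) = p by push_cast; ring] at this
    have hsq : q ^ 2 * ‖x‖ ^ 2 = ‖x‖ ^ 2 + 2 * ⟪x, h⟫_ℝ + ‖h‖ ^ 2 := by
      rw [← mul_pow, ← hqx, norm_add_sq_real]
    have hhp := Real.rpow_nonneg (norm_nonneg h) p
    calc ‖x + h‖ ^ p = q ^ p * ‖x‖ ^ p := by rw [hqx, Real.mul_rpow hq0 hx.le]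
      _ ≤ (1 + p / 2 * (q ^ 2 - 1)) * ‖x‖ ^ p := by gcongr
      _ = ‖x‖ ^ p + p / 2 * ‖x‖ ^ (p - 2) * (q ^ 2 * ‖x‖ ^ 2 - ‖x‖ ^ 2) := by
          rw [← hxsq]; ring
      _ = ‖x‖ ^ p + p * ‖x‖ ^ (p - 2) * ⟪x, h⟫_ℝ + p / 2 * (‖x‖ ^ (p - 2) * ‖h‖ ^ 2) := by
          rw [hsq]; ring
      _ ≤ ‖x‖ ^ p + p * ‖x‖ ^ (p - 2) * ⟪x, h⟫_ℝ + 6 * ‖h‖ ^ p := by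
          gcongr; linarith
  · have hh : 0 < ‖h‖ := hx.trans hlt
    have hsum : ‖x + h‖ ^ p ≤ 4 * ‖h‖ ^ p := by
      calc ‖x + h‖ ^ p ≤ (2 * ‖h‖) ^ p := by
            refine Real.rpow_le_rpow (norm_nonneg _) ?_ (by linarith)
            linarith [norm_add_le x h]
        _ = 2 ^ p * ‖h‖ ^ p := Real.mul_rpow (by norm_num) hh.le
        _ ≤ 2 ^ (2 : ℝ) * ‖h‖ ^ p := by gcongr; norm_num
        _ = 4 * ‖h‖ ^ p := by norm_num
    have hinner : -(p * ‖x‖ ^ (p - 2) * ⟪x, h⟫_ℝ) ≤ 2 * ‖h‖ ^ p := by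
      calc -(p * ‖x‖ ^ (p - 2) * ⟪x, h⟫_ℝ) = p * ‖x‖ ^ (p - 2) * -⟪x, h⟫_ℝ := by ring
        _ ≤ p * ‖x‖ ^ (p - 2) * (‖x‖ * ‖h‖) := by
            gcongr
            exact (neg_le_abs _).trans (abs_real_inner_le_norm x h)
        _ = p * (‖x‖ ^ (p - 1) * ‖h‖) := by rw [← hxmul]; ring
        _ ≤ 2 * (‖h‖ ^ (p - 1) * ‖h‖) := by
            gcongr
        _ = 2 * ‖h‖ ^ p := by rw [← Real.rpow_add_one hh.ne']; ring_nf
    have := Real.rpow_nonneg hx.le p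
    linarith

/-- Quantitative Jensen inequality from above for `‖·‖ ^ p`, `1 < p ≤ 2`. -/
lemma norm_rpow_jensen_upper {p : ℝ} (hp1 : 1 < p) (hp2 : p ≤ 2) {s t : ℝ} (hs : 0 ≤ s)
    (ht : 0 ≤ t) (hst : s + t = 1) (x y : E) :
    t * ‖x‖ ^ p + s * ‖y‖ ^ p - ‖t • x + s • y‖ ^ p ≤
      6 * ((t * s ^ p + s * t ^ p) * ‖y - x‖ ^ p) := by
  obtain rfl : s = 1 - t := by linarith
  set m := t • x + (1 - t) • y with hm
  have hx := norm_add_rpow_le hp1 hp2 m (-((1 - t) • (y - x)))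
  have hy := norm_add_rpow_le hp1 hp2 m (t • (y - x))
  rw [show m + -((1 - t) • (y - x)) = x by rw [hm]; module, inner_neg_right,
    real_inner_smul_right, norm_neg, norm_smul, Real.norm_of_nonneg hs,
    Real.mul_rpow hs (norm_nonneg _)] at hx
  rw [show m + t • (y - x) = y by rw [hm]; module, real_inner_smul_right, norm_smul,
    Real.norm_of_nonneg ht, Real.mul_rpow ht (norm_nonneg _)] at hy
  have h1 := mul_le_mul_of_nonneg_left hx ht
  have h2 := mul_le_mul_of_nonneg_left hy hs
  linarith

end InnerProductSpace

/-- (Lemma 3.1, case `p ∈ (1,2]`).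
There exist constants `c, C > 0` depending only on `p` such that for all `t ∈ [0,1]`
and all `z ∈ ℂ`:
`c t |z-1|² (|z-t| + 1 - t)^{p-2} ≤ |z-t|^p - (1-t)^{p-1} (|z|^p - t) ≤ C t^{p/2} |z-1|^p`.
(When `z = t = 1` the left-hand side vanishes automatically since `|z-1| = 0`.) -/
theorem stmt_1 (p : ℝ) (hp1 : 1 < p) (hp2 : p ≤ 2) :
    ∃ c C : ℝ, 0 < c ∧ 0 < C ∧
      ∀ (t : ℝ), 0 ≤ t → t ≤ 1 → ∀ z : ℂ,
        c * (t * ‖z - 1‖ ^ (2 : ℝ) * (‖z - (t : ℂ)‖ + 1 - t) ^ (p - 2))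
            ≤ ‖z - (t : ℂ)‖ ^ p - (1 - t) ^ (p - 1) * (‖z‖ ^ p - t)
          ∧ ‖z - (t : ℂ)‖ ^ p - (1 - t) ^ (p - 1) * (‖z‖ ^ p - t)
            ≤ C * (t ^ (p / 2) * ‖z - 1‖ ^ p) := by
  have hp0 : 0 < p := by linarith
  refine ⟨p * (p - 1) / 2, 12, by nlinarith, by norm_num, fun t ht ht1 z => ?_⟩
  rcases ht1.eq_or_lt with rfl | ht1
  · have hz := norm_nonneg (z - 1)
    have hc : p * (p - 1) / 2 ≤ 1 := by nlinarith
    have hzp := Real.rpow_nonneg hz p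
    have hlow : ‖z - 1‖ ^ (2 : ℝ) * ‖z - 1‖ ^ (p - 2) = ‖z - 1‖ ^ p := by
      rcases hz.eq_or_lt with h0 | hpos
      · rw [← h0, Real.zero_rpow two_ne_zero, Real.zero_rpow hp0.ne', zero_mul]
      · rw [← Real.rpow_add hpos]; ring_nf
    simp only [Complex.ofReal_one, sub_self, add_sub_cancel_right, one_mul, Real.one_rpow,
      Real.zero_rpow (by linarith : p - 1 ≠ 0), zero_mul, sub_zero, hlow]
    exact ⟨by nlinarith, by linarith⟩
  obtain ⟨s, rfl⟩ : ∃ s, t = 1 - s := ⟨1 - t, by ring⟩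
  have hs : 0 < s := by linarith
  have hs1 : s ≤ 1 := by linarith
  obtain ⟨a, rfl⟩ : ∃ a : ℂ, z = (1 - s) • (1 : ℂ) + s • a :=
    ⟨s⁻¹ • (z - (1 - s) • (1 : ℂ)), by rw [smul_inv_smul₀ hs.ne']; abel⟩
  have hsub : (1 - s) • (1 : ℂ) + s • a - ((1 - s : ℝ) : ℂ) = s • a := by
    simp [Complex.real_smul]
  have hsub1 : (1 - s) • (1 : ℂ) + s • a - 1 = s • (a - 1) := by module
  rw [hsub, hsub1, norm_smul, norm_smul, Real.norm_of_nonneg hs.le, sub_sub_cancel]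
  have hlow := norm_rpow_jensen_lower hp1 hp2 hs.le ht (by ring) (1 : ℂ) a
  have hupp := norm_rpow_jensen_upper hp1 hp2 hs.le ht (by ring) (1 : ℂ) a
  rw [norm_one, Real.one_rpow, mul_one] at hlow hupp
  have hsp : 0 < s ^ (p - 1) := Real.rpow_pos_of_pos hs _
  have hspow : s ^ p = s ^ (p - 1) * s := by rw [← Real.rpow_add_one hs.ne']; ring_nf
  have hspow2 : s ^ 2 * s ^ (p - 2) = s ^ (p - 1) * s := by
    rw [← hspow, ← Real.rpow_natCast, ← Real.rpow_add hs]; norm_num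
  have hmid : (s * ‖a‖) ^ p - s ^ (p - 1) * (‖(1 - s) • (1 : ℂ) + s • a‖ ^ p - (1 - s)) =
      s ^ (p - 1) * (1 - s + s * ‖a‖ ^ p - ‖(1 - s) • (1 : ℂ) + s • a‖ ^ p) := by
    rw [Real.mul_rpow hs.le (norm_nonneg a), hspow]; ring
  rw [hmid]
  constructor
  · refine le_of_eq_of_le ?_ (mul_le_mul_of_nonneg_left hlow hsp.le)
    rw [show s * ‖a‖ + 1 - (1 - s) = s * (‖a‖ + 1) by ring,
      Real.mul_rpow hs.le (by positivity : 0 ≤ ‖a‖ + 1), Real.rpow_two, mul_pow]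
    linear_combination (p * (p - 1) / 2 * (1 - s) * ‖a - 1‖ ^ 2 * (‖a‖ + 1) ^ (p - 2)) * hspow2
  · refine (mul_le_mul_of_nonneg_left hupp hsp.le).trans ?_
    have h1 : s ^ p ≤ s := by
      simpa using Real.rpow_le_rpow_of_exponent_ge hs hs1 hp1.le
    have hpow : ∀ q : ℝ, p / 2 ≤ q → (1 - s) ^ q ≤ (1 - s) ^ (p / 2) := fun q hq =>
      Real.rpow_le_rpow_of_exponent_ge_of_imp ht ht1.le hq fun _ h => by linarith
    have h2 : 1 - s ≤ (1 - s) ^ (p / 2) := by simpa using hpow 1 (by linarith)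
    have h3 : (1 - s) ^ p ≤ (1 - s) ^ (p / 2) := hpow p (by linarith)
    have hb := Real.rpow_nonneg (norm_nonneg (a - 1)) p
    calc s ^ (p - 1) * (6 * (((1 - s) * s ^ p + s * (1 - s) ^ p) * ‖a - 1‖ ^ p))
        ≤ s ^ (p - 1) * (6 * (((1 - s) ^ (p / 2) * s + s * (1 - s) ^ (p / 2)) * ‖a - 1‖ ^ p)) := by
          gcongr
      _ = 12 * ((1 - s) ^ (p / 2) * (s * ‖a - 1‖) ^ p) := by
          rw [Real.mul_rpow hs.le (norm_nonneg _), hspow]; ring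
end
end

section
/- Let ℓ ∈ ℕ and p > 1. Suppose 𝔤 ∈ H^ℓ satisfies (A1): ∇^k 𝔤_n > 0 for all n ≥ ℓ and k ∈ {0,…,ℓ}, (A2): −Δ_p^{(ℓ−k)}∇^k 𝔤_n ≥ 0 for all n ≥ ℓ and k ∈ {1,…,ℓ−1}, and (A3): −Δ_p^{(ℓ)}𝔤_n ≥ 0 for all n ≥ ℓ. Then the sequence ρ(𝔤)_n := (−Δ_p^{(ℓ)}𝔤_n)/𝔤_n^{p−1} is nonnegative for all n ≥ ℓ, and for every u ∈ H_0^ℓ one has ∑_{n=ℓ}^∞ |∇^ℓ u_n|^p ≥ ∑_{n=ℓ}^∞ ρ(𝔤)_n·|u_n|^p. -/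
open scoped BigOperators
open Finset Filter Asymptotics

noncomputable section

/-- Joint subadditivity of the perspective `(z, d) ↦ z ^ p / d ^ (p - 1)` of the power function. -/
theorem add_rpow_div_rpow_sub_one_le {p : ℝ} (hp : 1 ≤ p) {z y d c : ℝ} (hz : 0 ≤ z) (hy : 0 ≤ y)
    (hd : 0 < d) (hc : 0 < c) :
    (z + y) ^ p / (d + c) ^ (p - 1) ≤ z ^ p / d ^ (p - 1) + y ^ p / c ^ (p - 1) := by
  have hb : 0 < d + c := add_pos hd hc
  have perspective : ∀ {x t : ℝ}, 0 ≤ x → 0 < t → x ^ p / t ^ (p - 1) = t * (x / t) ^ p := by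
    intro x t hx ht
    rw [Real.div_rpow hx ht.le, Real.rpow_sub_one ht.ne']
    have := (Real.rpow_pos_of_pos ht p).ne'
    field_simp
  have hJ := (convexOn_rpow hp).2 (Set.mem_Ici.2 (div_nonneg hz hd.le))
    (Set.mem_Ici.2 (div_nonneg hy hc.le)) (div_nonneg hd.le hb.le) (div_nonneg hc.le hb.le)
    (by field_simp)
  have hmean : d / (d + c) * (z / d) + c / (d + c) * (y / c) = (z + y) / (d + c) := by
    field_simp
  simp only [smul_eq_mul, hmean] at hJ
  rw [perspective (add_nonneg hz hy) hb, perspective hz hd, perspective hy hc]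
  calc (d + c) * ((z + y) / (d + c)) ^ p
      ≤ (d + c) * (d / (d + c) * (z / d) ^ p + c / (d + c) * (y / c) ^ p) := by gcongr
    _ = d * (z / d) ^ p + c * (y / c) ^ p := by field_simp

/-- Discrete Picone inequality. -/
theorem norm_rpow_div_le_dgrad_add {p : ℝ} (hp : 1 < p) {m n : ℤ} {h : ℤ → ℝ} {v : ℤ → ℂ}
    (hh0 : ∀ n < m, h n = 0) (hv0 : ∀ n < m, v n = 0) (hh : ∀ n, m ≤ n → 0 < h n)
    (hdh : ∀ n, m ≤ n → 0 < rgrad h n) (hn : m ≤ n) :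
    ‖v n‖ ^ p / h n ^ (p - 1) ≤
      ‖dgrad v n‖ ^ p / rgrad h n ^ (p - 1) + ‖v (n - 1)‖ ^ p / h (n - 1) ^ (p - 1) := by
  rcases hn.eq_or_lt with rfl | hlt
  · have hh1 := hh0 (m - 1) (by lia)
    have hv1 := hv0 (m - 1) (by lia)
    simp [dgrad, rgrad, hh1, hv1, Real.zero_rpow (by linarith : p ≠ 0)]
  · have hsum : rgrad h n + h (n - 1) = h n := by simp [rgrad]
    have hpic := add_rpow_div_rpow_sub_one_le hp.le (norm_nonneg (dgrad v n))
      (norm_nonneg (v (n - 1))) (hdh n hn) (hh (n - 1) (by lia))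
    rw [hsum] at hpic
    refine le_trans ?_ hpic
    have htri : ‖v n‖ ≤ ‖dgrad v n‖ + ‖v (n - 1)‖ := by
      simpa [dgrad] using norm_add_le (dgrad v n) (v (n - 1))
    have := hh n hn
    gcongr

/-- One step of the Hardy chain: the weight `w` is lowered to `-div w` while the order of the
gradient decreases by one. -/
theorem sum_neg_rdiv_le_sum_dgrad {p : ℝ} (hp : 1 < p) {m : ℤ} {h w : ℤ → ℝ} {v : ℤ → ℂ}
    (hh0 : ∀ n < m, h n = 0) (hv0 : ∀ n < m, v n = 0) (hh : ∀ n, m ≤ n → 0 < h n)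
    (hdh : ∀ n, m ≤ n → 0 < rgrad h n) (hw : ∀ n, m ≤ n → 0 ≤ w n) (N : ℕ) :
    ∑ n ∈ range N, -rdiv w (m + n) / h (m + n) ^ (p - 1) * ‖v (m + n)‖ ^ p ≤
      ∑ n ∈ range N, w (m + n) / rgrad h (m + n) ^ (p - 1) * ‖dgrad v (m + n)‖ ^ p := by
  have hboundary : ∑ n ∈ range N, -rdiv w (m + n) / h (m + n) ^ (p - 1) * ‖v (m + n)‖ ^ p
      + w (m + N) * (‖v (m + N - 1)‖ ^ p / h (m + N - 1) ^ (p - 1)) ≤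
      ∑ n ∈ range N, w (m + n) / rgrad h (m + n) ^ (p - 1) * ‖dgrad v (m + n)‖ ^ p := by
    induction N with
    | zero => simp [hv0 (m - 1) (by lia), Real.zero_rpow (by linarith : p ≠ 0)]
    | succ N ih =>
      rw [sum_range_succ, sum_range_succ]
      have hpic := mul_le_mul_of_nonneg_left
        (norm_rpow_div_le_dgrad_add hp hh0 hv0 hh hdh (n := m + N) (by lia))
        (hw (m + N) (by lia))
      have hidx : m + ((N + 1 : ℕ) : ℤ) = m + N + 1 := by push_cast; ring
      have hidx' : m + (N : ℤ) + 1 - 1 = m + N := by ring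
      rw [hidx, hidx']
      simp only [rdiv, div_eq_mul_inv] at *
      linarith
  refine le_trans (le_add_of_nonneg_right ?_) hboundary
  rcases N.eq_zero_or_pos with rfl | hN
  · simp [hv0 (m - 1) (by lia), Real.zero_rpow (by linarith : p ≠ 0)]
  · have := hh (m + N - 1) (by lia)
    have := hw (m + N) (by lia)
    positivity

theorem rgrad_iterate_eq_zero_of_lt {m : ℤ} {g : ℤ → ℝ} (hg : ∀ n < m, g n = 0) (k : ℕ) :
    ∀ n < m, rgrad^[k] g n = 0 := by
  induction k with
  | zero => exact hg
  | succ k ih =>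
    intro n hn
    simp [Function.iterate_succ_apply', rgrad, ih n hn, ih (n - 1) (by lia)]

theorem dgrad_iterate_eq_zero_of_lt {m : ℤ} {u : ℤ → ℂ} (hu : ∀ n < m, u n = 0) (k : ℕ) :
    ∀ n < m, dgrad^[k] u n = 0 := by
  induction k with
  | zero => exact hu
  | succ k ih =>
    intro n hn
    simp [Function.iterate_succ_apply', dgrad, ih n hn, ih (n - 1) (by lia)]

theorem finite_support_dgrad_iterate {u : ℤ → ℂ} (hu : (Function.support u).Finite) (k : ℕ) :
    (Function.support (dgrad^[k] u)).Finite := by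
  induction k with
  | zero => exact hu
  | succ k ih =>
    rw [Function.iterate_succ_apply']
    have hshift : (Function.support fun n => dgrad^[k] u (n - 1)).Finite :=
      ih.preimage (sub_left_injective.injOn)
    exact (ih.union hshift).subset (Function.support_sub _ _)

/-- The series of a multiple of `‖v‖ ^ p` converges when `v` is finitely supported. -/
theorem summable_mul_norm_rpow {p : ℝ} (hp : p ≠ 0) (m : ℤ) (c : ℤ → ℝ) {v : ℤ → ℂ}
    (hv : (Function.support v).Finite) :
    Summable fun n : ℕ => c (m + n) * ‖v (m + n)‖ ^ p := by
  refine summable_of_hasFiniteSupport ((hv.preimage (f := fun n : ℕ => m + (n : ℤ)) ?_).subset ?_)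
  · exact fun a _ b _ hab => by simpa using hab
  · intro n hn hv0
    apply hn
    simp [show v (m + n) = 0 by simpa using hv0, Real.zero_rpow hp]

/-- The Hardy weight numerators satisfy `w_k = -div w_{k+1}`. -/
theorem pLap_rgrad_iterate_eq_neg_rdiv (p : ℝ) (g : ℤ → ℝ) {k ℓ : ℕ} (hk : k < ℓ) (n : ℤ) :
    pLap p (ℓ - k) (rgrad^[k] g) n = -rdiv (pLap p (ℓ - (k + 1)) (rgrad^[k + 1] g)) n := by
  obtain ⟨j, rfl⟩ := Nat.exists_eq_add_of_lt hk
  have hj : k + j + 1 - k = j + 1 := by lia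
  have hj' : k + j + 1 - (k + 1) = j := by lia
  have hfun : rgrad^[j + 1] (rgrad^[k] g) = rgrad^[j] (rgrad^[k + 1] g) := by
    rw [← Function.iterate_add_apply, ← Function.iterate_add_apply]
    congr 1
    lia
  rw [hj, hj']
  simp only [pLap, hfun, Function.iterate_succ_apply' rdiv, rdiv]
  ring

/-- Theorem 2.4, first part.
Under assumptions (A1), (A2), (A3) on `𝔤 ∈ H^ℓ`, the sequence
`ρ(𝔤)_n = (-Δ_p^{(ℓ)}𝔤_n)/𝔤_n^{p-1}` is nonnegative for `n ≥ ℓ` and is a discrete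
`p`-Hardy–Rellich–Birman weight: `∑_{n≥ℓ} |∇^ℓ u_n|^p ≥ ∑_{n≥ℓ} ρ(𝔤)_n |u_n|^p` for all
`u ∈ H_0^ℓ`. -/
theorem stmt_4 (ℓ : ℕ) (hℓ : 0 < ℓ) (p : ℝ) (hp : 1 < p) (g : ℤ → ℝ)
    (hH : ∀ n : ℤ, n < (ℓ : ℤ) → g n = 0)
    (hA1 : ∀ n : ℤ, (ℓ : ℤ) ≤ n → ∀ k : ℕ, k ≤ ℓ → 0 < rgrad^[k] g n)
    (hA2 : ∀ n : ℤ, (ℓ : ℤ) ≤ n → ∀ k : ℕ, 1 ≤ k → k < ℓ →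
        0 ≤ pLap p (ℓ - k) (rgrad^[k] g) n)
    (hA3 : ∀ n : ℤ, (ℓ : ℤ) ≤ n → 0 ≤ pLap p ℓ g n) :
    (∀ n : ℤ, (ℓ : ℤ) ≤ n → 0 ≤ pLap p ℓ g n / g n ^ (p - 1))
      ∧ ∀ u : ℤ → ℂ,
          (∀ n : ℤ, n < (ℓ : ℤ) → u n = 0) →
          (Function.support u).Finite →
            tsumFrom ℓ (fun n => pLap p ℓ g n / g n ^ (p - 1) * ‖u n‖ ^ p)
              ≤ tsumFrom ℓ (fun n => ‖dgrad^[ℓ] u n‖ ^ p) := by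
  have hw : ∀ k ≤ ℓ, ∀ n : ℤ, (ℓ : ℤ) ≤ n → 0 ≤ pLap p (ℓ - k) (rgrad^[k] g) n := by
    intro k hk n hn
    rcases k.eq_zero_or_pos with rfl | hk0
    · simpa using hA3 n hn
    rcases hk.eq_or_lt with rfl | hlt
    · have := hA1 n hn k le_rfl
      simp only [pLap, sgnPow, Nat.sub_self, Function.iterate_zero, id, pow_zero, one_mul]
      positivity
    · exact hA2 n hn k hk0 hlt
  refine ⟨fun n hn => ?_, fun u hu0 hu => ?_⟩
  · exact div_nonneg (hA3 n hn) (Real.rpow_nonneg (hA1 n hn 0 (Nat.zero_le _)).le _)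
  have hp0 : p ≠ 0 := by linarith
  have hchain : ∀ N k : ℕ, k ≤ ℓ →
      ∑ n ∈ range N, pLap p ℓ g (ℓ + n) / g (ℓ + n) ^ (p - 1) * ‖u (ℓ + n)‖ ^ p ≤
        ∑ n ∈ range N, pLap p (ℓ - k) (rgrad^[k] g) (ℓ + n) / rgrad^[k] g (ℓ + n) ^ (p - 1)
          * ‖dgrad^[k] u (ℓ + n)‖ ^ p := by
    intro N k
    induction k with
    | zero => intro _; simp
    | succ k ih =>
      intro hk
      refine (ih (by lia)).trans ?_
      have hstep := sum_neg_rdiv_le_sum_dgrad hp (m := ℓ) (h := rgrad^[k] g) (v := dgrad^[k] u)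
        (w := pLap p (ℓ - (k + 1)) (rgrad^[k + 1] g))
        (rgrad_iterate_eq_zero_of_lt hH k) (dgrad_iterate_eq_zero_of_lt hu0 k)
        (fun n hn => hA1 n hn k (by lia))
        (fun n hn => by simpa only [Function.iterate_succ_apply'] using hA1 n hn (k + 1) hk)
        (hw (k + 1) hk) N
      simp only [← pLap_rgrad_iterate_eq_neg_rdiv p g (Nat.lt_of_succ_le hk)] at hstep
      simpa only [Function.iterate_succ_apply' rgrad k, Function.iterate_succ_apply' dgrad k]
        using hstep
  have htop : ∀ n : ℕ, pLap p (ℓ - ℓ) (rgrad^[ℓ] g) (ℓ + n) / rgrad^[ℓ] g (ℓ + n) ^ (p - 1)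
      * ‖dgrad^[ℓ] u (ℓ + n)‖ ^ p = ‖dgrad^[ℓ] u (ℓ + n)‖ ^ p := by
    intro n
    have hpos := hA1 (ℓ + n) (by lia) ℓ le_rfl
    have hpow : rgrad^[ℓ] g (ℓ + n) * rgrad^[ℓ] g (ℓ + n) ^ (p - 1 - 1)
        = rgrad^[ℓ] g (ℓ + n) ^ (p - 1) := by
      rw [Real.rpow_sub_one hpos.ne', mul_div_cancel₀ _ hpos.ne']
    simp only [pLap, sgnPow, Nat.sub_self, Function.iterate_zero, id, pow_zero, one_mul,
      abs_of_pos hpos, hpow]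
    rw [div_self (Real.rpow_pos_of_pos hpos _).ne', one_mul]
  refine (summable_mul_norm_rpow hp0 ℓ (fun n => pLap p ℓ g n / g n ^ (p - 1))
    hu).tsum_le_of_sum_range_le fun N => ?_
  refine (hchain N ℓ le_rfl).trans ?_
  simp only [htop]
  have hsum : Summable fun n : ℕ => ‖dgrad^[ℓ] u (ℓ + n)‖ ^ p := by
    simpa using summable_mul_norm_rpow hp0 ℓ (fun _ => 1) (finite_support_dgrad_iterate hu ℓ)
  exact hsum.sum_le_tsum _ fun n _ => by positivity
end
end

section
/- Let ℓ ∈ ℕ and p > 1. Suppose 𝔤 ∈ H^ℓ satisfies (A1): ∇^k 𝔤_n > 0 for all n ≥ ℓ and k ∈ {0,…,ℓ}, (A2): −Δ_p^{(ℓ−k)}∇^k 𝔤_n ≥ 0 for all n ≥ ℓ and k ∈ {1,…,ℓ−1}, and (A3): −Δ_p^{(ℓ)}𝔤_n ≥ 0 for all n ≥ ℓ. Set ρ(𝔤)_n := (−Δ_p^{(ℓ)}𝔤_n)/𝔤_n^{p−1}. If u ∈ H_0^ℓ satisfies ∑_{n=ℓ}^∞ |∇^ℓ u_n|^p = ∑_{n=ℓ}^∞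 ρ(𝔤)_n·|u_n|^p, then u ≡ 0. -/
open scoped BigOperators
open Finset Filter Asymptotics

noncomputable section

/-- Strict subadditivity of the perspective `(x, s) ↦ x ^ p / s ^ (p - 1)`. -/
lemma rpow_perspective_add_le {p s t x y : ℝ} (hp : 1 < p) (hs : 0 < s) (ht : 0 < t)
    (hx : 0 ≤ x) (hy : 0 ≤ y) :
    (x + y) ^ p / (s + t) ^ (p - 1) ≤ x ^ p / s ^ (p - 1) + y ^ p / t ^ (p - 1) ∧
      ((x + y) ^ p / (s + t) ^ (p - 1) = x ^ p / s ^ (p - 1) + y ^ p / t ^ (p - 1) →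
        x * t = y * s) := by
  have hst : 0 < s + t := add_pos hs ht
  have perspective : ∀ {r z : ℝ}, 0 < r → 0 ≤ z → z ^ p / r ^ (p - 1) = r * (z / r) ^ p := by
    intro r z hr hz
    rw [Real.div_rpow hz hr.le, Real.rpow_sub hr, Real.rpow_one]
    field_simp
  rw [perspective hst (add_nonneg hx hy), perspective hs hx, perspective ht hy]
  have hcomb : (x + y) / (s + t) = s / (s + t) * (x / s) + t / (s + t) * (y / t) := by
    field_simp
  have hright : s * (x / s) ^ p + t * (y / t) ^ p
      = (s + t) * (s / (s + t) * (x / s) ^ p + t / (s + t) * (y / t) ^ p) := by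
    field_simp
  have hsum : s / (s + t) + t / (s + t) = 1 := by field_simp
  rw [hcomb, hright]
  refine ⟨mul_le_mul_of_nonneg_left ?_ hst.le, fun heq => ?_⟩
  · exact (convexOn_rpow hp.le).2 (Set.mem_Ici.2 (div_nonneg hx hs.le))
      (Set.mem_Ici.2 (div_nonneg hy ht.le)) (by positivity) (by positivity) hsum
  · by_contra hne
    have hne' : x / s ≠ y / t := fun h => hne ((div_eq_div_iff hs.ne' ht.ne').1 h)
    have hlt := (strictConvexOn_rpow hp).2 (Set.mem_Ici.2 (div_nonneg hx hs.le))
      (Set.mem_Ici.2 (div_nonneg hy ht.le)) hne' (div_pos hs hst) (div_pos ht hst) hsum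
    exact hlt.ne (mul_left_cancel₀ hst.ne' heq)

lemma norm_rpow_perspective_add_le {p s t : ℝ} (hp : 1 < p) (hs : 0 < s) (ht : 0 < t) (x y : ℂ) :
    ‖x + y‖ ^ p / (s + t) ^ (p - 1) ≤ ‖x‖ ^ p / s ^ (p - 1) + ‖y‖ ^ p / t ^ (p - 1) := by
  refine le_trans ?_ (rpow_perspective_add_le hp hs ht (norm_nonneg x) (norm_nonneg y)).1
  gcongr
  exact norm_add_le x y

lemma smul_eq_smul_of_norm_rpow_perspective_add_eq {p s t : ℝ} (hp : 1 < p) (hs : 0 < s)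
    (ht : 0 < t) {x y : ℂ}
    (h : ‖x + y‖ ^ p / (s + t) ^ (p - 1) = ‖x‖ ^ p / s ^ (p - 1) + ‖y‖ ^ p / t ^ (p - 1)) :
    t • x = s • y := by
  obtain ⟨hle, heq⟩ := rpow_perspective_add_le hp hs ht (norm_nonneg x) (norm_nonneg y)
  have hpow : 0 < (s + t) ^ (p - 1) := Real.rpow_pos_of_pos (add_pos hs ht) _
  have hnorm : ‖x + y‖ = ‖x‖ + ‖y‖ := by
    refine le_antisymm (norm_add_le x y) (le_of_not_gt fun hlt => ?_)
    have := div_lt_div_of_pos_right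
      (Real.rpow_lt_rpow (norm_nonneg _) hlt (zero_lt_one.trans hp)) hpow
    linarith
  have hxy : ‖x‖ * t = ‖y‖ * s := heq (hnorm ▸ h)
  have hray := sameRay_iff_norm_smul_eq.1 (sameRay_iff_norm_add.2 hnorm)
  by_cases hx : x = 0
  · have hy : y = 0 := by simpa [hx, hs.ne'] using hxy.symm
    simp [hx, hy]
  · refine smul_right_injective ℂ (norm_ne_zero_iff.2 hx) ?_
    simp only
    rw [smul_smul, hxy, mul_comm ‖y‖ s, mul_smul, smul_comm ‖x‖ s y, hray]

/-- The energy density `‖v_n‖ ^ p / h_n ^ (p - 1)`. -/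
def perspectiveDensity (p : ℝ) (h : ℤ → ℝ) (v : ℤ → ℂ) (n : ℤ) : ℝ :=
  ‖v n‖ ^ p / h n ^ (p - 1)

lemma perspectiveDensity_eq_zero {p : ℝ} (hp : 1 < p) (h : ℤ → ℝ) {v : ℤ → ℂ} {n : ℤ}
    (hv : v n = 0) : perspectiveDensity p h v n = 0 := by
  simp [perspectiveDensity, hv, Real.zero_rpow (zero_lt_one.trans hp).ne']

/-- Discrete Picone inequality. -/
lemma perspectiveDensity_sub_le {p : ℝ} (hp : 1 < p) {a n : ℤ} {h : ℤ → ℝ} {v : ℤ → ℂ}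
    (hh : ∀ m < a, h m = 0) (hv : ∀ m < a, v m = 0) (hpos : ∀ m, a ≤ m → 0 < h m)
    (hgrad : ∀ m, a ≤ m → 0 < rgrad h m) (hn : a ≤ n) :
    perspectiveDensity p h v n - perspectiveDensity p h v (n - 1)
      ≤ perspectiveDensity p (rgrad h) (dgrad v) n := by
  rcases hn.eq_or_lt with rfl | hlt
  · rw [perspectiveDensity_eq_zero hp h (hv (a - 1) (by omega))]
    simp [perspectiveDensity, rgrad, dgrad, hh (a - 1) (by omega), hv (a - 1) (by omega)]
  · have := norm_rpow_perspective_add_le hp (hpos (n - 1) (by omega)) (hgrad n hn)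
      (v (n - 1)) (dgrad v n)
    simp only [rgrad, dgrad, add_sub_cancel] at this
    simp only [perspectiveDensity, rgrad, dgrad]
    linarith

lemma eq_zero_of_perspectiveDensity_sub_eq {p : ℝ} (hp : 1 < p) {n : ℤ} {h : ℤ → ℝ} {v : ℤ → ℂ}
    (hprev : 0 < h (n - 1)) (hpos : 0 < h n) (hgrad : 0 < rgrad h n)
    (heq : perspectiveDensity p h v n - perspectiveDensity p h v (n - 1)
      = perspectiveDensity p (rgrad h) (dgrad v) n)
    (hv : v n = 0) : v (n - 1) = 0 := by
  have hlin : rgrad h n • v (n - 1) = h (n - 1) • dgrad v n := by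
    refine smul_eq_smul_of_norm_rpow_perspective_add_eq hp hprev hgrad ?_
    simp only [perspectiveDensity, rgrad, dgrad] at heq
    simp only [rgrad, dgrad, add_sub_cancel]
    linarith
  have hzero : h n • v (n - 1) = 0 := by
    rw [dgrad, hv, zero_sub, smul_neg, rgrad, sub_smul] at hlin
    linear_combination hlin
  exact (smul_eq_zero.1 hzero).resolve_left hpos.ne'

lemma sum_mul_sub_eq_sum_sub_mul (W F : ℤ → ℝ) (a : ℤ) (M : ℕ) :
    ∑ i ∈ range M, W (a + i) * (F (a + i) - F (a + i - 1))
      = ∑ i ∈ range M, (W (a + i) - W (a + i + 1)) * F (a + i)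
        + W (a + M) * F (a + M - 1) - W a * F (a - 1) := by
  induction M with
  | zero => simp
  | succ M ih =>
    rw [sum_range_succ, sum_range_succ, ih]
    push_cast
    rw [show a + (M + 1 : ℤ) - 1 = a + M by ring, ← add_assoc]
    ring

lemma iterate_rgrad_eq_zero {g : ℤ → ℝ} {a : ℤ} (hg : ∀ n < a, g n = 0) (k : ℕ) :
    ∀ n < a, rgrad^[k] g n = 0 := by
  induction k with
  | zero => simpa using hg
  | succ k ih =>
    intro n hn
    rw [Function.iterate_succ_apply', rgrad, ih n hn, ih (n - 1) (by omega), sub_zero]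

lemma iterate_dgrad_eq_zero {u : ℤ → ℂ} {a : ℤ} (hu : ∀ n < a, u n = 0) (k : ℕ) :
    ∀ n < a, dgrad^[k] u n = 0 := by
  induction k with
  | zero => simpa using hu
  | succ k ih =>
    intro n hn
    rw [Function.iterate_succ_apply', dgrad, ih n hn, ih (n - 1) (by omega), sub_zero]

lemma iterate_dgrad_eq_zero_of_ge {u : ℤ → ℂ} {b : ℤ} (hu : ∀ n, b ≤ n → u n = 0) (k : ℕ) :
    ∀ n, b + k ≤ n → dgrad^[k] u n = 0 := by
  induction k with
  | zero => simpa using hu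
  | succ k ih =>
    intro n hn
    push_cast at hn
    rw [Function.iterate_succ_apply', dgrad, ih n (by omega), ih (n - 1) (by omega), sub_zero]

lemma eq_zero_of_dgrad_eq_zero {v : ℤ → ℂ} {a : ℤ} (hv : ∀ n < a, v n = 0)
    (h : ∀ n, dgrad v n = 0) (n : ℤ) : v n = 0 := by
  rcases lt_or_ge n a with hn | hn
  · exact hv n hn
  · induction n, hn using Int.leInduction with
    | base => simpa [dgrad, hv (a - 1) (by omega)] using h a
    | succ n _ ih => simpa [dgrad, ih] using h (n + 1)

lemma eq_zero_of_iterate_dgrad_eq_zero {u : ℤ → ℂ} {a : ℤ} (hu : ∀ n < a, u n = 0) (k : ℕ)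
    (h : ∀ n, dgrad^[k] u n = 0) : ∀ n, u n = 0 := by
  induction k with
  | zero => simpa using h
  | succ k ih =>
    refine ih (eq_zero_of_dgrad_eq_zero (iterate_dgrad_eq_zero hu k) fun n => ?_)
    rw [← Function.iterate_succ_apply' dgrad]
    exact h n

lemma exists_forall_ge_eq_zero {u : ℤ → ℂ} (hu : (Function.support u).Finite) (a : ℤ) :
    ∃ K : ℕ, ∀ n, a + K ≤ n → u n = 0 := by
  obtain ⟨b, hb⟩ := hu.bddAbove
  refine ⟨(b - a + 1).toNat, fun n hn => ?_⟩
  by_contra hne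
  have := hb (Function.mem_support.2 hne)
  omega

lemma tsumFrom_eq_sum {a : ℤ} {f : ℤ → ℝ} {M : ℕ} (hf : ∀ n, a + M ≤ n → f n = 0) :
    tsumFrom a f = ∑ i ∈ range M, f (a + i) :=
  tsum_eq_sum fun i hi => hf _ (by rw [mem_range] at hi; omega)

/-- The signed iterated divergence `(-1) ^ j * div ^ j X`. -/
def signedDiv (X : ℤ → ℝ) (j : ℕ) (n : ℤ) : ℝ := (-1 : ℝ) ^ j * rdiv^[j] X n

lemma signedDiv_succ (X : ℤ → ℝ) (j : ℕ) (n : ℤ) :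
    signedDiv X (j + 1) n = signedDiv X j n - signedDiv X j (n + 1) := by
  simp only [signedDiv, Function.iterate_succ_apply', rdiv, pow_succ]
  ring

lemma pLap_iterate_rgrad (p : ℝ) (g : ℤ → ℝ) {j l : ℕ} (hj : j ≤ l) :
    pLap p j (rgrad^[l - j] g) = signedDiv (fun n => sgnPow (p - 1) (rgrad^[l] g n)) j := by
  funext n
  simp only [pLap, signedDiv, ← Function.iterate_add_apply, Nat.add_sub_cancel' hj]

lemma sgnPow_of_pos {a v : ℝ} (hv : 0 < v) : sgnPow a v = v ^ a := by
  rw [sgnPow, abs_of_pos hv, Real.rpow_sub hv, Real.rpow_one]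
  field_simp

/-- Theorem 2.4, second part: non-attainability in `H_0^ℓ`.
Under assumptions (A1), (A2), (A3) on `𝔤 ∈ H^ℓ`, if `u ∈ H_0^ℓ` attains equality in the
inequality `∑_{n≥ℓ} |∇^ℓ u_n|^p ≥ ∑_{n≥ℓ} ρ(𝔤)_n |u_n|^p`, then `u ≡ 0`. -/
theorem stmt_5 (ℓ : ℕ) (hℓ : 0 < ℓ) (p : ℝ) (hp : 1 < p) (g : ℤ → ℝ)
    (hH : ∀ n : ℤ, n < (ℓ : ℤ) → g n = 0)
    (hA1 : ∀ n : ℤ, (ℓ : ℤ) ≤ n → ∀ k : ℕ, k ≤ ℓ → 0 < rgrad^[k] g n)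
    (hA2 : ∀ n : ℤ, (ℓ : ℤ) ≤ n → ∀ k : ℕ, 1 ≤ k → k < ℓ →
        0 ≤ pLap p (ℓ - k) (rgrad^[k] g) n)
    (hA3 : ∀ n : ℤ, (ℓ : ℤ) ≤ n → 0 ≤ pLap p ℓ g n) :
    ∀ u : ℤ → ℂ,
      (∀ n : ℤ, n < (ℓ : ℤ) → u n = 0) →
      (Function.support u).Finite →
      tsumFrom ℓ (fun n => ‖dgrad^[ℓ] u n‖ ^ p)
        = tsumFrom ℓ (fun n => pLap p ℓ g n / g n ^ (p - 1) * ‖u n‖ ^ p) →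
      ∀ n : ℤ, u n = 0 := by
  intro u hu hfin heq
  obtain ⟨K, hK⟩ := exists_forall_ge_eq_zero hfin ℓ
  set W : ℕ → ℤ → ℝ := signedDiv (fun n => sgnPow (p - 1) (rgrad^[ℓ] g n)) with hW
  set E : ℕ → ℤ → ℝ := fun j => perspectiveDensity p (rgrad^[ℓ - j] g) (dgrad^[ℓ - j] u) with hE
  set M : ℕ := K + ℓ + 1 with hM
  set T : ℕ → ℝ := fun j => ∑ i ∈ range M, W j (ℓ + i) * E j (ℓ + i) with hT
  have hW0 : ∀ n : ℤ, (ℓ : ℤ) ≤ n → W 0 n = rgrad^[ℓ] g n ^ (p - 1) := fun n hn => by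
    simp [hW, signedDiv, sgnPow_of_pos (hA1 n hn ℓ le_rfl)]
  have hWnonneg : ∀ j < ℓ, ∀ n : ℤ, (ℓ : ℤ) ≤ n → 0 ≤ W j n := fun j hj n hn => by
    rcases Nat.eq_zero_or_pos j with rfl | hjpos
    · rw [hW0 n hn]
      exact Real.rpow_nonneg (hA1 n hn ℓ le_rfl).le _
    · have := hA2 n hn (ℓ - j) (by omega) (by omega)
      rwa [Nat.sub_sub_self hj.le, pLap_iterate_rgrad p g hj.le] at this
  have hEzero : ∀ j, ∀ n : ℤ, n < ℓ ∨ (ℓ : ℤ) + K + ℓ ≤ n → E j n = 0 := fun j n hn => by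
    refine perspectiveDensity_eq_zero hp _ ?_
    rcases hn with hn | hn
    · exact iterate_dgrad_eq_zero hu _ n hn
    · exact iterate_dgrad_eq_zero_of_ge hK _ n (by omega)
  have hlocal : ∀ j < ℓ, ∀ n : ℤ, (ℓ : ℤ) ≤ n → E (j + 1) n - E (j + 1) (n - 1) ≤ E j n := by
    intro j hj n hn
    have hsucc : ℓ - j = ℓ - (j + 1) + 1 := by omega
    simp only [hE, hsucc, Function.iterate_succ_apply']
    refine perspectiveDensity_sub_le hp (iterate_rgrad_eq_zero hH _) (iterate_dgrad_eq_zero hu _)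
      (fun m hm => hA1 m hm _ (by omega)) (fun m hm => ?_) hn
    rw [← Function.iterate_succ_apply' rgrad]
    exact hA1 m hm _ (by omega)
  have hparts : ∀ j, T (j + 1)
      = ∑ i ∈ range M, W j (ℓ + i) * (E (j + 1) (ℓ + i) - E (j + 1) (ℓ + i - 1)) := fun j => by
    rw [sum_mul_sub_eq_sum_sub_mul, hEzero (j + 1) (ℓ - 1) (by omega),
      hEzero (j + 1) (ℓ + M - 1) (by omega)]
    simp [hT, hW, signedDiv_succ]
  have hmul : ∀ j < ℓ, ∀ i ∈ range M,
      W j (ℓ + i) * (E (j + 1) (ℓ + i) - E (j + 1) (ℓ + i - 1)) ≤ W j (ℓ + i) * E j (ℓ + i) :=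
    fun j hj i _ => mul_le_mul_of_nonneg_left (hlocal j hj _ (by omega))
      (hWnonneg j hj _ (by omega))
  have hstep : ∀ j < ℓ, T (j + 1) ≤ T j := fun j hj => by
    rw [hparts]
    exact sum_le_sum (hmul j hj)
  have hchain : ∀ j, 1 ≤ j → j ≤ ℓ → T j ≤ T 1 := fun j hj => by
    induction j, hj using Nat.le_induction with
    | base => exact fun _ => le_rfl
    | succ j _ ih => exact fun hj => (hstep j (by omega)).trans (ih (by omega))
  have hends : T 0 = T ℓ := by
    rw [tsumFrom_eq_sum (M := M), tsumFrom_eq_sum (M := M)] at heq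
    · convert heq using 1
      · refine sum_congr rfl fun i _ => ?_
        have hpos := Real.rpow_pos_of_pos (hA1 (ℓ + i) (by omega) ℓ le_rfl) (p - 1)
        rw [hW0 _ (by omega)]
        simp only [hE, perspectiveDensity, Nat.sub_zero]
        field_simp
      · refine sum_congr rfl fun i _ => ?_
        have hlap := pLap_iterate_rgrad p g (le_refl ℓ)
        simp only [Nat.sub_self, Function.iterate_zero, id] at hlap
        simp only [hE, perspectiveDensity, Nat.sub_self, Function.iterate_zero, id, hlap, hW]
        ring
    · intro n hn
      rw [hK n (by omega), norm_zero, Real.zero_rpow (by linarith), mul_zero]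
    · intro n hn
      rw [iterate_dgrad_eq_zero_of_ge hK ℓ n (by omega), norm_zero, Real.zero_rpow (by linarith)]
  have htop : T 1 = T 0 := le_antisymm (hstep 0 hℓ) (hends ▸ hchain ℓ hℓ le_rfl)
  rw [hparts] at htop
  have hattained := (sum_eq_sum_iff_of_le (hmul 0 hℓ)).1 htop
  have hback : ∀ n : ℤ, dgrad^[ℓ - 1] u n = 0 → dgrad^[ℓ - 1] u (n - 1) = 0 := by
    intro n hzero
    rcases lt_or_ge (n - 1) (ℓ : ℤ) with hlt | hge
    · exact iterate_dgrad_eq_zero hu _ _ hlt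
    rcases lt_or_ge (n - 1) ((ℓ : ℤ) + K + ℓ) with hlt | hge'
    · have hi := hattained (n - ℓ).toNat (mem_range.2 (by omega))
      rw [show (ℓ : ℤ) + ((n - ℓ).toNat : ℤ) = n by omega] at hi
      have hpos : 0 < W 0 n := by
        rw [hW0 n (by omega)]
        exact Real.rpow_pos_of_pos (hA1 n (by omega) ℓ le_rfl) _
      have hEeq := mul_left_cancel₀ hpos.ne' hi
      have hsucc : ℓ - 0 = ℓ - 1 + 1 := by omega
      simp only [hE, hsucc, zero_add, Function.iterate_succ_apply'] at hEeq
      refine eq_zero_of_perspectiveDensity_sub_eq hp (hA1 _ hge _ (by omega))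
        (hA1 n (by omega) _ (by omega)) ?_ hEeq hzero
      rw [← Function.iterate_succ_apply' rgrad]
      exact hA1 n (by omega) _ (by omega)
    · exact iterate_dgrad_eq_zero_of_ge hK _ _ (by omega)
  refine eq_zero_of_iterate_dgrad_eq_zero hu (ℓ - 1) fun n => ?_
  rcases le_total ((ℓ : ℤ) + K + ℓ) n with hn | hn
  · exact iterate_dgrad_eq_zero_of_ge hK _ n (by omega)
  · induction n, hn using Int.leInductionDown with
    | base => exact iterate_dgrad_eq_zero_of_ge hK _ _ (by omega)
    | pred n _ ih => exact hback n ih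
end
end

section
/- Let q > 1. The function g(x) := Γ(x+1/q)/Γ(x+1) is logarithmically completely monotone on (0,∞); that is, g > 0 on (0,∞) and the function h(x) := −(log g(x))' = ψ(x+1) − ψ(x+1/q) satisfies (−1)^k h^{(k)}(x) ≥ 0 for every integer k ≥ 0 and every x > 0 (in fact these inequalities are strict). -/
noncomputable section

open Set Filter Topology

/-- The digamma function `ψ` on the real line, as the derivative of `log ∘ Γ`. -/
local notation "ψ" => deriv (Real.log ∘ Real.Gamma)

lemma differentiableAt_log_Gamma {x : ℝ} (hx : 0 < x) :
    DifferentiableAt ℝ (Real.log ∘ Real.Gamma) x :=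
  (Real.differentiableAt_Gamma fun m => by
    have : (0 : ℝ) ≤ m := m.cast_nonneg
    linarith).log (Real.Gamma_pos_of_pos hx).ne'

lemma deriv_log_Gamma_add_one {x : ℝ} (hx : 0 < x) : ψ (x + 1) = ψ x + x⁻¹ := by
  have heq : (fun y => (Real.log ∘ Real.Gamma) (y + 1)) =ᶠ[𝓝 x]
      fun y => (Real.log ∘ Real.Gamma) y + Real.log y := by
    filter_upwards [lt_mem_nhds hx] with y hy
    simp only [Function.comp_apply]
    rw [Real.Gamma_add_one hy.ne', Real.log_mul hy.ne' (Real.Gamma_pos_of_pos hy).ne', add_comm]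
  rw [← deriv_comp_add_const, heq.deriv_eq]
  exact ((differentiableAt_log_Gamma hx).hasDerivAt.add (Real.hasDerivAt_log hx.ne')).deriv

lemma monotoneOn_deriv_log_Gamma : MonotoneOn ψ (Ioi 0) :=
  Real.convexOn_log_Gamma.monotoneOn_deriv fun _ hx => differentiableAt_log_Gamma hx

lemma deriv_log_Gamma_div_Gamma {a b x : ℝ} (ha : 0 < x + a) (hb : 0 < x + b) :
    deriv (fun z => Real.log (Real.Gamma (z + a) / Real.Gamma (z + b))) x =
      ψ (x + a) - ψ (x + b) := by
  have heq : (fun z => Real.log (Real.Gamma (z + a) / Real.Gamma (z + b))) =ᶠ[𝓝 x]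
      fun z => (Real.log ∘ Real.Gamma) (z + a) - (Real.log ∘ Real.Gamma) (z + b) := by
    filter_upwards [lt_mem_nhds (show -a < x by linarith),
      lt_mem_nhds (show -b < x by linarith)] with z hza hzb
    exact Real.log_div (Real.Gamma_pos_of_pos (by linarith)).ne'
      (Real.Gamma_pos_of_pos (by linarith)).ne'
  rw [heq.deriv_eq]
  exact (((differentiableAt_log_Gamma ha).hasDerivAt.comp_add_const x a).sub
    ((differentiableAt_log_Gamma hb).hasDerivAt.comp_add_const x b)).deriv

/-- Up to the sign `(-1) ^ k`, the `k`-th derivative in `x` of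
`1 / (x + n + a) - 1 / (x + n + 1)`. -/
def digammaTerm (a : ℝ) (k n : ℕ) (x : ℝ) : ℝ :=
  k.factorial * (((x + n + a) ^ (k + 1))⁻¹ - ((x + n + 1) ^ (k + 1))⁻¹)

lemma digammaTerm_pos {a x : ℝ} (ha : 0 < a) (ha1 : a < 1) (hx : 0 < x) (k n : ℕ) :
    0 < digammaTerm a k n x := by
  have hlt : (x + n + a) ^ (k + 1) < (x + n + 1) ^ (k + 1) := by gcongr
  exact mul_pos (by positivity) (sub_pos.2 (inv_strictAnti₀ (by positivity) hlt))

lemma digammaTerm_le {a x : ℝ} (ha : 0 < a) (hx : 0 < x) (k n : ℕ) :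
    digammaTerm a k n x ≤ k.factorial * ((n + a) ^ (k + 1))⁻¹ := by
  have hle : ((x + n + a) ^ (k + 1))⁻¹ ≤ ((n + a) ^ (k + 1))⁻¹ := by
    gcongr
    linarith
  have hnonneg : 0 ≤ ((x + n + 1) ^ (k + 1))⁻¹ := by positivity
  exact mul_le_mul_of_nonneg_left (by linarith) (by positivity)

lemma hasDerivAt_digammaTerm {a x : ℝ} (ha : 0 < a) (hx : 0 < x) (k n : ℕ) :
    HasDerivAt (digammaTerm a k n) (-digammaTerm a (k + 1) n x) x := by
  have hinv (c : ℝ) (hc : 0 < c) : HasDerivAt (fun y : ℝ => ((y + n + c) ^ (k + 1))⁻¹)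
      (-((k + 1) * ((x + n + c) ^ (k + 2))⁻¹)) x := by
    have hpos : 0 < x + n + c := by positivity
    have hlin : HasDerivAt (fun y : ℝ => y + n + c) 1 x :=
      ((hasDerivAt_id x).add_const _).add_const _
    refine ((hlin.pow (k + 1)).inv (pow_pos hpos _).ne').congr_deriv ?_
    simp only [Pi.pow_apply, Nat.add_sub_cancel]
    push_cast
    field_simp
    ring
  refine (((hinv a ha).sub (hinv 1 one_pos)).const_mul (k.factorial : ℝ)).congr_deriv ?_
  simp only [digammaTerm, Nat.factorial_succ]
  push_cast
  ring

/-- For `0 < a < 1` and `x > 0`, `ψ (x + 1) - ψ (x + a) = ∑ (1 / (x + n + a) - 1 / (x + n + 1))`. -/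
lemma hasSum_digammaTerm_zero {a x : ℝ} (ha : 0 < a) (ha1 : a < 1) (hx : 0 < x) :
    HasSum (fun n => digammaTerm a 0 n x) (ψ (x + 1) - ψ (x + a)) := by
  rw [hasSum_iff_tendsto_nat_of_nonneg fun n => (digammaTerm_pos ha ha1 hx 0 n).le]
  have hsum (N : ℕ) : ∑ n ∈ Finset.range N, digammaTerm a 0 n x =
      (ψ (x + 1) - ψ (x + a)) - (ψ (x + N + 1) - ψ (x + N + a)) := by
    induction N with
    | zero => simp
    | succ N ih =>
      have h1 := deriv_log_Gamma_add_one (x := x + N + 1) (by positivity)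
      have h2 := deriv_log_Gamma_add_one (x := x + N + a) (by positivity)
      rw [Finset.sum_range_succ, ih, digammaTerm]
      push_cast
      rw [show x + ((N : ℝ) + 1) + 1 = x + N + 1 + 1 by ring,
        show x + ((N : ℝ) + 1) + a = x + N + a + 1 by ring, h1, h2]
      simp only [Nat.factorial_zero, Nat.cast_one, pow_one]
      ring
  have hrem : Tendsto (fun N : ℕ => ψ (x + N + 1) - ψ (x + N + a)) atTop (𝓝 0) := by
    have hlim : Tendsto (fun N : ℕ => (x + N + a)⁻¹) atTop (𝓝 0) :=
      (tendsto_atTop_add_const_right _ _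
        (tendsto_atTop_add_const_left _ _ tendsto_natCast_atTop_atTop)).inv_tendsto_atTop
    refine squeeze_zero (fun N => ?_) (fun N => ?_) hlim
    · exact sub_nonneg.2 (monotoneOn_deriv_log_Gamma (mem_Ioi.2 (by positivity))
        (mem_Ioi.2 (by positivity)) (by linarith))
    · have h1 := deriv_log_Gamma_add_one (x := x + N + a) (by positivity)
      have h2 : ψ (x + N + 1) ≤ ψ (x + N + a + 1) :=
        monotoneOn_deriv_log_Gamma (mem_Ioi.2 (by positivity)) (mem_Ioi.2 (by positivity))
          (by linarith)
      linarith
  simp only [hsum]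
  simpa using hrem.const_sub (ψ (x + 1) - ψ (x + a))

lemma summable_digammaTerm_bound {a : ℝ} (ha : 0 < a) (k : ℕ) :
    Summable fun n : ℕ => ((k + 1).factorial : ℝ) * ((n + a) ^ (k + 1 + 1))⁻¹ := by
  refine Summable.mul_left _ (((Real.summable_one_div_nat_add_rpow a ((k + 2 : ℕ) : ℝ)).2 ?_).congr
    fun n => ?_)
  · push_cast
    have : (0 : ℝ) ≤ k := k.cast_nonneg
    linarith
  · rw [Real.rpow_natCast, abs_of_pos (by positivity), one_div]

lemma summable_digammaTerm {a x : ℝ} (ha : 0 < a) (ha1 : a < 1) (hx : 0 < x) :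
    ∀ k : ℕ, Summable fun n => digammaTerm a k n x
  | 0 => (hasSum_digammaTerm_zero ha ha1 hx).summable
  | k + 1 => (summable_digammaTerm_bound ha k).of_nonneg_of_le
      (fun n => (digammaTerm_pos ha ha1 hx _ n).le) fun n => digammaTerm_le ha hx _ n

lemma hasDerivAt_tsum_digammaTerm {a x : ℝ} (ha : 0 < a) (ha1 : a < 1) (hx : 0 < x) (k : ℕ) :
    HasDerivAt (fun y => ∑' n, digammaTerm a k n y) (-∑' n, digammaTerm a (k + 1) n x) x := by
  rw [← tsum_neg]
  refine hasDerivAt_tsum_of_isPreconnected (summable_digammaTerm_bound ha k) isOpen_Ioi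
    isPreconnected_Ioi (fun n y hy => hasDerivAt_digammaTerm ha hy k n) (fun n y hy => ?_)
    (mem_Ioi.2 hx) (summable_digammaTerm ha ha1 hx k) (mem_Ioi.2 hx)
  rw [norm_neg, Real.norm_of_nonneg (digammaTerm_pos ha ha1 hy _ n).le]
  exact digammaTerm_le ha hy _ n

lemma iteratedDeriv_neg_deriv_log_Gamma_div_Gamma {a : ℝ} (ha : 0 < a) (ha1 : a < 1) (k : ℕ) :
    ∀ x : ℝ, 0 < x → iteratedDeriv k (fun y => -(deriv (fun z =>
      Real.log (Real.Gamma (z + a) / Real.Gamma (z + 1))) y)) x =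
        (-1) ^ k * ∑' n, digammaTerm a k n x := by
  induction k with
  | zero =>
    intro x hx
    rw [iteratedDeriv_zero, deriv_log_Gamma_div_Gamma (by positivity) (by positivity),
      (hasSum_digammaTerm_zero ha ha1 hx).tsum_eq]
    ring
  | succ k ih =>
    intro x hx
    rw [iteratedDeriv_succ, EventuallyEq.deriv_eq ((lt_mem_nhds hx).mono ih),
      ((hasDerivAt_tsum_digammaTerm ha ha1 hx k).const_mul _).deriv]
    ring

/-- Lemma 4.2: for `q > 1` the function
`g(x) = Γ(x + 1/q) / Γ(x + 1)` is logarithmically completely monotone on `(0,∞)`: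
`g > 0` there and `h := -(log g)'` satisfies `(-1)^k h^{(k)}(x) ≥ 0` for all `k ≥ 0`
and `x > 0`; in fact these inequalities are strict. -/
theorem stmt_10 (q : ℝ) (hq : 1 < q) :
    (∀ x : ℝ, 0 < x → 0 < Real.Gamma (x + 1 / q) / Real.Gamma (x + 1))
      ∧ (∀ (k : ℕ) (x : ℝ), 0 < x →
          0 ≤ (-1 : ℝ) ^ k *
            iteratedDeriv k
              (fun y => -(deriv (fun z =>
                Real.log (Real.Gamma (z + 1 / q) / Real.Gamma (z + 1))) y)) x)
      ∧ (∀ (k : ℕ) (x : ℝ), 0 < x →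
          0 < (-1 : ℝ) ^ k *
            iteratedDeriv k
              (fun y => -(deriv (fun z =>
                Real.log (Real.Gamma (z + 1 / q) / Real.Gamma (z + 1))) y)) x) := by
  have ha : 0 < 1 / q := by positivity
  have ha1 : 1 / q < 1 := (div_lt_one (by positivity)).2 hq
  have hstrict : ∀ (k : ℕ) (x : ℝ), 0 < x → 0 < (-1 : ℝ) ^ k *
      iteratedDeriv k (fun y => -(deriv (fun z =>
        Real.log (Real.Gamma (z + 1 / q) / Real.Gamma (z + 1))) y)) x := by
    intro k x hx
    rw [iteratedDeriv_neg_deriv_log_Gamma_div_Gamma ha ha1 k x hx, ← mul_assoc, ← mul_pow]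
    simpa using (summable_digammaTerm ha ha1 hx k).tsum_pos
      (fun n => (digammaTerm_pos ha ha1 hx k n).le) 0 (digammaTerm_pos ha ha1 hx k 0)
  exact ⟨fun x hx => div_pos (Real.Gamma_pos_of_pos (by positivity))
    (Real.Gamma_pos_of_pos (by positivity)), fun k x hx => (hstrict k x hx).le, hstrict⟩
end
end

section
/- Let ℓ ∈ ℕ and p > 1 with Hölder conjugate q (1/p + 1/q = 1). Then for every integer n ≥ ℓ one has Γ(n−ℓ+1)/Γ(n+1/q) > 1/n^{ℓ−1/p}. -/
noncomputable section

/-- Log-convexity of `Γ` between `x` and `x + 1`. -/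
theorem Gamma_add_le_rpow_mul_Gamma {x s : ℝ} (hx : 0 < x) (hs : 0 < s) (hs1 : s < 1) :
    Real.Gamma (x + s) ≤ x ^ s * Real.Gamma x := by
  have h := Real.Gamma_mul_add_mul_le_rpow_Gamma_mul_rpow_Gamma hx (by linarith : 0 < x + 1)
    (sub_pos.2 hs1) hs (by ring)
  have hG := Real.Gamma_pos_of_pos hx
  rw [Real.Gamma_add_one hx.ne', Real.mul_rpow hx.le hG.le, mul_left_comm,
    ← Real.rpow_add hG, sub_add_cancel, Real.rpow_one] at h
  convert h using 2
  ring

/-- Strict form of Wendel's upper bound for ratios of `Γ`. -/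
theorem Gamma_add_lt_rpow_mul_Gamma {x s : ℝ} (hx : 0 < x) (hs : 0 < s) (hs1 : s < 1) :
    Real.Gamma (x + s) < x ^ s * Real.Gamma x := by
  have hG := Real.Gamma_pos_of_pos hx
  have hxs : 0 < x + s := by positivity
  have hB : (1 + 1 / x) ^ s < 1 + s * (1 / x) :=
    rpow_one_add_lt_one_add_mul_self (by linarith [one_div_pos.2 hx])
      (one_div_pos.2 hx).ne' hs hs1
  have hshift : (x + s) * Real.Gamma (x + s) ≤ (x + 1) ^ s * (x * Real.Gamma x) := by
    have h := Gamma_add_le_rpow_mul_Gamma (by linarith : 0 < x + 1) hs hs1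
    rwa [Real.Gamma_add_one hx.ne', add_right_comm, Real.Gamma_add_one hxs.ne'] at h
  have hpow : (x + 1) ^ s = x ^ s * (1 + 1 / x) ^ s := by
    rw [← Real.mul_rpow hx.le (by positivity)]
    congr 1
    field_simp
  refine lt_of_mul_lt_mul_left ?_ hxs.le
  calc (x + s) * Real.Gamma (x + s) ≤ (x + 1) ^ s * (x * Real.Gamma x) := hshift
    _ = x ^ s * (1 + 1 / x) ^ s * (x * Real.Gamma x) := by rw [hpow]
    _ < x ^ s * (1 + s * (1 / x)) * (x * Real.Gamma x) := by gcongr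
    _ = (x + s) * (x ^ s * Real.Gamma x) := by field_simp

theorem Gamma_add_natCast_le_pow_mul_Gamma {x : ℝ} (hx : 0 < x) (k : ℕ) :
    Real.Gamma (x + k) ≤ (x + k) ^ k * Real.Gamma x := by
  have hG := Real.Gamma_pos_of_pos hx
  induction k with
  | zero => simp
  | succ k ih =>
    have hk : 0 < x + k := by positivity
    push_cast
    rw [← add_assoc, Real.Gamma_add_one hk.ne']
    calc (x + k) * Real.Gamma (x + k) ≤ (x + k) * ((x + k) ^ k * Real.Gamma x) := by gcongr
      _ = (x + k) ^ (k + 1) * Real.Gamma x := by ring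
      _ ≤ (x + k + 1) ^ (k + 1) * Real.Gamma x :=
        mul_le_mul_of_nonneg_right (pow_le_pow_left₀ hk.le (by linarith) _) hG.le

/-- Lemma 4.4: for all integers `n ≥ ℓ`,
`Γ(n - ℓ + 1) / Γ(n + 1/q) > 1 / n^{ℓ - 1/p}`. -/
theorem stmt_14 (ℓ : ℕ) (hℓ : 0 < ℓ) (p q : ℝ) (hp : 1 < p) (hpq : 1 / p + 1 / q = 1)
    (n : ℤ) (hn : (ℓ : ℤ) ≤ n) :
    1 / (n : ℝ) ^ ((ℓ : ℝ) - 1 / p)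
      < Real.Gamma ((n : ℝ) - ℓ + 1) / Real.Gamma ((n : ℝ) + 1 / q) := by
  have hp0 : 0 < 1 / p := by positivity
  have hp1 : 1 / p < 1 := by rw [div_lt_one] <;> linarith
  obtain ⟨k, rfl⟩ : ∃ k, ℓ = k + 1 := ⟨ℓ - 1, by omega⟩
  have hn' : ((k + 1 : ℕ) : ℝ) ≤ n := by exact_mod_cast hn
  push_cast at hn' ⊢
  have hn0 : (0 : ℝ) < n := by linarith [k.cast_nonneg (α := ℝ)]
  have hs : 0 < 1 / q := by linarith
  have hs1 : 1 / q < 1 := by linarith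
  have hx : (0 : ℝ) < n - k := by linarith
  have hexp : (k : ℝ) + 1 - 1 / p = 1 / q + k := by linarith
  have hk := Gamma_add_natCast_le_pow_mul_Gamma hx k
  rw [sub_add_cancel] at hk
  rw [hexp, sub_add_eq_sub_sub, sub_add_cancel, Real.rpow_add hn0, Real.rpow_natCast,
    div_lt_div_iff₀ (by positivity) (Real.Gamma_pos_of_pos (by positivity)), one_mul]
  calc Real.Gamma (n + 1 / q) < (n : ℝ) ^ (1 / q) * Real.Gamma n :=
        Gamma_add_lt_rpow_mul_Gamma hn0 hs hs1
    _ ≤ (n : ℝ) ^ (1 / q) * ((n : ℝ) ^ k * Real.Gamma (n - k)) := by gcongr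
    _ = Real.Gamma (n - k) * ((n : ℝ) ^ (1 / q) * (n : ℝ) ^ k) := by ring
end
end

section
/- Let p > 1 with Hölder conjugate q (1/p + 1/q = 1). The function f(x) := (Γ(x+1/q)/Γ(x+1))^{p−1} − (x+1)^{−1/q} is completely monotone on (0,∞); that is, (−1)^k f^{(k)}(x) ≥ 0 for every integer k ≥ 0 and every x > 0. -/
noncomputable section

open Set Filter Topology

/-- `f` is completely monotone up to order `n` on `(0, ∞)`: it is nonnegative there and, if
`0 < n`, its negated derivative is completely monotone up to order `n - 1`. -/
def CompletelyMonotoneUpTo : ℕ → (ℝ → ℝ) → Prop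
  | 0, f => ∀ x, 0 < x → 0 ≤ f x
  | n + 1, f => (∀ x, 0 < x → 0 ≤ f x) ∧
      ∃ g : ℝ → ℝ, (∀ x, 0 < x → HasDerivAt f (-g x) x) ∧ CompletelyMonotoneUpTo n g

namespace CompletelyMonotoneUpTo

variable {n : ℕ} {f g : ℝ → ℝ}

theorem nonneg (hf : CompletelyMonotoneUpTo n f) {x : ℝ} (hx : 0 < x) : 0 ≤ f x := by
  cases n with
  | zero => exact hf x hx
  | succ n => exact hf.1 x hx

theorem of_succ (hf : CompletelyMonotoneUpTo (n + 1) f) : CompletelyMonotoneUpTo n f := by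
  induction n generalizing f with
  | zero => exact hf.1
  | succ n ih =>
    obtain ⟨h0, g, hg, hgn⟩ := hf
    exact ⟨h0, g, hg, ih hgn⟩

theorem congr (hf : CompletelyMonotoneUpTo n f) (h : ∀ x, 0 < x → f x = g x) :
    CompletelyMonotoneUpTo n g := by
  cases n with
  | zero => exact fun x hx => h x hx ▸ hf x hx
  | succ n =>
    obtain ⟨h0, f', hf', hn⟩ := hf
    refine ⟨fun x hx => h x hx ▸ h0 x hx, f', fun x hx => ?_, hn⟩
    refine (hf' x hx).congr_of_eventuallyEq ?_
    filter_upwards [lt_mem_nhds hx] with y hy using (h y hy).symm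

theorem add (hf : CompletelyMonotoneUpTo n f) (hg : CompletelyMonotoneUpTo n g) :
    CompletelyMonotoneUpTo n (fun x => f x + g x) := by
  induction n generalizing f g with
  | zero => exact fun x hx => add_nonneg (hf x hx) (hg x hx)
  | succ n ih =>
    obtain ⟨hf0, f', hf', hfn⟩ := hf
    obtain ⟨hg0, g', hg', hgn⟩ := hg
    refine ⟨fun x hx => add_nonneg (hf0 x hx) (hg0 x hx), _, fun x hx => ?_, ih hfn hgn⟩
    exact ((hf' x hx).fun_add (hg' x hx)).congr_deriv (by ring)

theorem mul (hf : CompletelyMonotoneUpTo n f) (hg : CompletelyMonotoneUpTo n g) :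
    CompletelyMonotoneUpTo n (fun x => f x * g x) := by
  induction n generalizing f g with
  | zero => exact fun x hx => mul_nonneg (hf x hx) (hg x hx)
  | succ n ih =>
    have hf₁ := hf.of_succ
    have hg₁ := hg.of_succ
    obtain ⟨hf0, f', hf', hfn⟩ := hf
    obtain ⟨hg0, g', hg', hgn⟩ := hg
    refine ⟨fun x hx => mul_nonneg (hf0 x hx) (hg0 x hx), _, fun x hx => ?_,
      (ih hfn hg₁).add (ih hf₁ hgn)⟩
    exact ((hf' x hx).fun_mul (hg' x hx)).congr_deriv (by ring)

theorem const {c : ℝ} (hc : 0 ≤ c) : CompletelyMonotoneUpTo n (fun _ => c) := by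
  induction n generalizing c with
  | zero => exact fun _ _ => hc
  | succ n ih =>
    exact ⟨fun _ _ => hc, _, fun x _ => (hasDerivAt_const x c).congr_deriv (by simp), ih le_rfl⟩

theorem inv_add {a : ℝ} (ha : 0 ≤ a) : CompletelyMonotoneUpTo n (fun x => (x + a)⁻¹) := by
  induction n with
  | zero => exact fun x hx => by positivity
  | succ n ih =>
    refine ⟨fun x hx => by positivity, _, fun x hx => ?_, ih.mul ih⟩
    have hxa : x + a ≠ 0 := by positivity
    refine (((hasDerivAt_id' x).add_const a).fun_inv hxa).congr_deriv ?_
    field_simp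

theorem exp (hf : CompletelyMonotoneUpTo n f) :
    CompletelyMonotoneUpTo n (fun x => Real.exp (f x)) := by
  induction n with
  | zero => exact fun x _ => (Real.exp_pos _).le
  | succ n ih =>
    have hexp := ih hf.of_succ
    obtain ⟨_, f', hf', hfn⟩ := hf
    refine ⟨fun x _ => (Real.exp_pos _).le, _, fun x hx => ?_, hfn.mul hexp⟩
    exact (hf' x hx).exp.congr_deriv (by ring)

theorem exp_sub_one (hf : CompletelyMonotoneUpTo n f) :
    CompletelyMonotoneUpTo n (fun x => Real.exp (f x) - 1) := by
  have hnonneg : ∀ x, 0 < x → 0 ≤ Real.exp (f x) - 1 := fun x hx => by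
    linarith [Real.add_one_le_exp (f x), hf.nonneg hx]
  cases n with
  | zero => exact hnonneg
  | succ n =>
    obtain ⟨_, g, hg, hgn⟩ := hf.exp
    exact ⟨hnonneg, g, fun x hx => (hg x hx).sub_const 1, hgn⟩

theorem rpow_neg_add {a s : ℝ} (ha : 0 ≤ a) (hs : 0 ≤ s) :
    CompletelyMonotoneUpTo n (fun x => (x + a) ^ (-s)) := by
  induction n with
  | zero => exact fun x hx => by positivity
  | succ n ih =>
    refine ⟨fun x hx => by positivity, _, fun x hx => ?_,
      (const hs).mul (ih.mul (inv_add ha))⟩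
    have hxa : 0 < x + a := by positivity
    refine (((hasDerivAt_id' x).add_const a).rpow_const (p := -s) (Or.inl hxa.ne')).congr_deriv ?_
    rw [Real.rpow_sub hxa, Real.rpow_one]
    ring

theorem comp_add_const (hf : CompletelyMonotoneUpTo n f) {a : ℝ} (ha : 0 ≤ a) :
    CompletelyMonotoneUpTo n (fun x => f (x + a)) := by
  induction n generalizing f with
  | zero => exact fun x hx => hf _ (by positivity)
  | succ n ih =>
    obtain ⟨h0, g, hg, hgn⟩ := hf
    exact ⟨fun x hx => h0 _ (by positivity), _,
      fun x hx => (hg (x + a) (by positivity)).comp_add_const x a, ih hgn⟩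

theorem le_of_le (hf : CompletelyMonotoneUpTo (n + 1) f) {x y : ℝ} (hx : 0 < x) (hxy : x ≤ y) :
    f y ≤ f x := by
  obtain ⟨_, g, hg, hgn⟩ := hf
  refine antitoneOn_of_deriv_nonpos (convex_Ioi (0 : ℝ))
    (fun z hz => (hg z hz).continuousAt.continuousWithinAt) (fun z hz => ?_) (fun z hz => ?_)
    hx (hx.trans_le hxy) hxy
  · rw [interior_Ioi] at hz
    exact (hg z hz).differentiableAt.differentiableWithinAt
  · rw [interior_Ioi] at hz
    rw [(hg z hz).deriv]
    linarith [hgn.nonneg hz]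

theorem neg_deriv_le (hf : ∀ x, 0 < x → 0 ≤ f x) (hfg : ∀ x, 0 < x → HasDerivAt f (-g x) x)
    (hg : CompletelyMonotoneUpTo (n + 1) g) {x : ℝ} (hx : 0 < x) :
    g x ≤ f (x / 2) * (2 / x) := by
  obtain ⟨c, hc, hc'⟩ := exists_hasDerivAt_eq_slope f (fun y => -g y) (half_lt_self hx)
    (fun y hy => (hfg y ((half_pos hx).trans_le hy.1)).continuousAt.continuousWithinAt)
    (fun y hy => hfg y ((half_pos hx).trans hy.1))
  have hgx := hg.le_of_le ((half_pos hx).trans hc.1) hc.2.le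
  have hslope : g c = (f (x / 2) - f x) * (2 / x) := by
    have : x - x / 2 = x / 2 := by ring
    rw [this] at hc'
    rw [← neg_neg (g c), hc']
    field_simp
    ring
  calc g x ≤ (f (x / 2) - f x) * (2 / x) := hgx.trans_eq hslope
    _ ≤ f (x / 2) * (2 / x) := by
      gcongr
      linarith [hf x hx]

theorem tsum {F : ℕ → ℝ → ℝ} (hF : ∀ i, CompletelyMonotoneUpTo (n + 1) (F i))
    (hsum : ∀ x, 0 < x → Summable (fun i => F i x)) :
    CompletelyMonotoneUpTo n (fun x => ∑' i, F i x) := by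
  induction n generalizing F with
  | zero => exact fun x hx => tsum_nonneg fun i => (hF i).nonneg hx
  | succ n ih =>
    refine ⟨fun x hx => tsum_nonneg fun i => (hF i).nonneg hx, ?_⟩
    choose h0 G hG hGn using hF
    have hGsum : ∀ x, 0 < x → Summable (fun i => G i x) := fun x hx =>
      Summable.of_nonneg_of_le (fun i => (hGn i).nonneg hx)
        (fun i => neg_deriv_le (h0 i) (hG i) (hGn i) hx)
        ((hsum (x / 2) (half_pos hx)).mul_right _)
    refine ⟨_, fun x hx => ?_, ih hGn hGsum⟩
    have hx2 := half_pos hx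
    rw [← tsum_neg]
    refine hasDerivAt_tsum_of_isPreconnected (hGsum (x / 2) hx2) isOpen_Ioi isPreconnected_Ioi
      (fun i y hy => hG i y (hx2.trans hy)) (fun i y hy => ?_) (half_lt_self hx) (hsum x hx)
      (half_lt_self hx)
    rw [norm_neg, Real.norm_of_nonneg ((hGn i).nonneg (hx2.trans hy))]
    exact (hGn i).le_of_le hx2 (le_of_lt hy)

theorem iteratedDeriv_nonneg (hf : CompletelyMonotoneUpTo n f) {x : ℝ} (hx : 0 < x) :
    0 ≤ (-1 : ℝ) ^ n * iteratedDeriv n f x := by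
  induction n generalizing f with
  | zero => simpa using hf x hx
  | succ n ih =>
    obtain ⟨_, g, hg, hgn⟩ := hf
    have hderiv : deriv f =ᶠ[𝓝 x] fun y => -g y := by
      filter_upwards [lt_mem_nhds hx] with y hy using (hg y hy).deriv
    rw [iteratedDeriv_succ', hderiv.iteratedDeriv_eq, iteratedDeriv_fun_neg, pow_succ]
    linarith [ih hgn]

end CompletelyMonotoneUpTo

open CompletelyMonotoneUpTo

/-- The difference `D x - D (x + 1)`, where
`D x = c * (log Γ(x + s) - log Γ(x + 1)) + s * log (x + 1)`. -/
def logGammaRatioStep (c s x : ℝ) : ℝ :=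
  c * (Real.log (x + 1) - Real.log (x + s)) - s * (Real.log (x + 2) - Real.log (x + 1))

variable {c s : ℝ}

theorem logGammaRatioStep_nonneg (hs0 : 0 < s) (hc0 : 0 ≤ c) (hc : c * (1 - s) = s) {x : ℝ}
    (hx : 0 < x) : 0 ≤ logGammaRatioStep c s x := by
  have hlow : (1 - s) / (x + 1) ≤ Real.log (x + 1) - Real.log (x + s) := by
    rw [← Real.log_div (by positivity) (by positivity)]
    refine le_trans (le_of_eq ?_) (Real.one_sub_inv_le_log_of_pos (by positivity))
    field_simp
    ring
  have hupp : Real.log (x + 2) - Real.log (x + 1) ≤ 1 / (x + 1) := by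
    rw [← Real.log_div (by positivity) (by positivity)]
    refine (Real.log_le_sub_one_of_pos (by positivity)).trans (le_of_eq ?_)
    field_simp
    ring
  have hlow' := mul_le_mul_of_nonneg_left hlow hc0
  have hupp' := mul_le_mul_of_nonneg_left hupp hs0.le
  have heq : c * ((1 - s) / (x + 1)) = s * (1 / (x + 1)) := by
    rw [← mul_div_assoc, hc, mul_one_div]
  unfold logGammaRatioStep
  linarith

theorem completelyMonotoneUpTo_logGammaRatioStep (n : ℕ) (hs0 : 0 < s) (hs2 : s ≤ 2)
    (hc0 : 0 ≤ c) (hc : c * (1 - s) = s) :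
    CompletelyMonotoneUpTo n (logGammaRatioStep c s) := by
  cases n with
  | zero => exact fun x hx => logGammaRatioStep_nonneg hs0 hc0 hc hx
  | succ n =>
    refine ⟨fun x hx => logGammaRatioStep_nonneg hs0 hc0 hc hx, _, fun x hx => ?_,
      (const (c := s * (2 - s)) (mul_nonneg hs0.le (by linarith))).mul
        ((inv_add zero_le_one).mul ((inv_add hs0.le).mul (inv_add zero_le_two)))⟩
    have hlog : ∀ a : ℝ, 0 ≤ a → HasDerivAt (fun y => Real.log (y + a)) (1 / (x + a)) x :=
      fun a ha => ((hasDerivAt_id' x).add_const a).log (by positivity)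
    refine ((((hlog 1 zero_le_one).fun_sub (hlog s hs0.le)).const_mul c).fun_sub
      (((hlog 2 zero_le_two).fun_sub (hlog 1 zero_le_one)).const_mul s)).congr_deriv ?_
    have h1 : c * (1 / (x + 1) - 1 / (x + s)) = -(s / ((x + 1) * (x + s))) := by
      field_simp
      linear_combination -hc
    rw [h1]
    field_simp
    ring

theorem tendsto_log_natCast_sub_log_add (a : ℝ) :
    Tendsto (fun n : ℕ => Real.log n - Real.log (n + a)) atTop (𝓝 0) := by
  have h := (Real.tendsto_log_comp_add_sub_log a).comp tendsto_natCast_atTop_atTop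
  simpa [Function.comp_def] using h.neg

theorem hasSum_logGammaRatioStep (hs0 : 0 < s) (hc0 : 0 ≤ c) (hc : c * (1 - s) = s) {x : ℝ}
    (hx : 0 < x) :
    HasSum (fun i : ℕ => logGammaRatioStep c s (x + i))
      (c * (Real.log (Real.Gamma (x + s)) - Real.log (Real.Gamma (x + 1)))
        + s * Real.log (x + 1)) := by
  rw [hasSum_iff_tendsto_nat_of_nonneg
    fun i => logGammaRatioStep_nonneg hs0 hc0 hc (by positivity), ← tendsto_add_atTop_iff_nat 1]
  have hseq := ((((Real.BohrMollerup.tendsto_log_gamma (x := x + s) (by positivity)).sub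
    (Real.BohrMollerup.tendsto_log_gamma (x := x + 1) (by positivity))).const_mul c).add_const
      (s * Real.log (x + 1))).add ((tendsto_log_natCast_sub_log_add (x + 2)).const_mul s)
  rw [mul_zero, add_zero] at hseq
  refine hseq.congr fun n => ?_
  have htel := Finset.sum_range_sub (fun i : ℕ => Real.log (x + 1 + i)) (n + 1)
  have hshift : ∀ i : ℕ, Real.log (x + 1 + (i + 1 : ℕ)) = Real.log (x + i + 2) := fun i => by
    congr 1
    push_cast
    ring
  have hlast : Real.log (n + (x + 2)) = Real.log (x + n + 2) := by
    congr 1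
    ring
  simp only [hshift, Finset.sum_sub_distrib, Nat.cast_zero, add_zero] at htel
  simp only [logGammaRatioStep, Finset.sum_sub_distrib, ← Finset.mul_sum,
    Real.BohrMollerup.logGammaSeq, add_right_comm x _ (1 : ℝ), add_right_comm x _ s, hlast]
  rw [htel]
  linear_combination (-Real.log n) * hc

/-- Step 1 in the proof of Lemma 4.5: the function
`f(x) = (Γ(x+1/q)/Γ(x+1))^{p-1} - (x+1)^{-1/q}` is completely monotone on `(0,∞)`. -/
theorem stmt_16 (p q : ℝ) (hp : 1 < p) (hpq : 1 / p + 1 / q = 1) :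
    ∀ (k : ℕ) (x : ℝ), 0 < x →
      0 ≤ (-1 : ℝ) ^ k *
        iteratedDeriv k
          (fun y => (Real.Gamma (y + 1 / q) / Real.Gamma (y + 1)) ^ (p - 1)
              - (y + 1) ^ (-(1 / q))) x := by
  intro k x hx
  generalize 1 / q = s at hpq ⊢
  have hp0 : 0 < p := zero_lt_one.trans hp
  have hs0 : 0 < s := by
    have : 1 / p < 1 := (div_lt_one hp0).2 hp
    linarith
  have hs2 : s ≤ 2 := by
    have : 0 < 1 / p := by positivity
    linarith
  have hc0 : 0 ≤ p - 1 := by linarith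
  have hc : (p - 1) * (1 - s) = s := by
    have hps : 1 - s = 1 / p := by linarith
    have : p * (1 - s) = 1 := by rw [hps, mul_one_div_cancel hp0.ne']
    linear_combination this
  have hD := fun y (hy : 0 < y) => hasSum_logGammaRatioStep hs0 hc0 hc hy
  have hCM : CompletelyMonotoneUpTo k
      (fun y => ∑' i : ℕ, logGammaRatioStep (p - 1) s (y + i)) :=
    tsum (fun i => (completelyMonotoneUpTo_logGammaRatioStep (k + 1) hs0 hs2 hc0 hc).comp_add_const
      i.cast_nonneg) fun y hy => (hD y hy).summable
  refine iteratedDeriv_nonneg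
    (((rpow_neg_add zero_le_one hs0.le).mul hCM.exp_sub_one).congr fun y hy => ?_) hx
  have hΓs : 0 < Real.Gamma (y + s) := Real.Gamma_pos_of_pos (by positivity)
  have hΓ1 : 0 < Real.Gamma (y + 1) := Real.Gamma_pos_of_pos (by positivity)
  rw [(hD y hy).tsum_eq, mul_sub, mul_one, Real.rpow_def_of_pos (by positivity : 0 < y + 1),
    ← Real.exp_add, Real.rpow_def_of_pos (div_pos hΓs hΓ1), Real.log_div hΓs.ne' hΓ1.ne']
  congr 2
  ring
end
end

section
/- Let ℓ ∈ ℕ and p > 1. The range of the ℓ-th discrete gradient restricted to H_0^ℓ, i.e., the set {∇^ℓ u | u ∈ H_0^ℓ}, is dense in H^{ℓ,p} with respect to the ℓ^p-norm. -/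
open scoped BigOperators
open Finset Filter Asymptotics

noncomputable section

open scoped ENNReal Topology

section Density

variable {q : ℝ≥0∞}

/-- Right translates of `p`-summable sequences are `p`-summable. -/
theorem Memℓp.comp_sub_one {f : ℤ → ℂ} (hq : 0 < q.toReal) (hf : Memℓp f q) :
    Memℓp (fun n => f (n - 1)) q :=
  (memℓp_gen_iff hq).2 <|
    (Equiv.subRight (1 : ℤ)).summable_iff.2 ((memℓp_gen_iff hq).1 hf)

/-- The right shift as a continuous linear map of `ℓ^q(ℤ)`. -/
def lpShift [Fact (1 ≤ q)] (hq : 0 < q.toReal) :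
    lp (fun _ : ℤ => ℂ) q →L[ℂ] lp (fun _ : ℤ => ℂ) q :=
  LinearMap.mkContinuous
    { toFun := fun f => ⟨fun n => f (n - 1), (lp.memℓp f).comp_sub_one hq⟩
      map_add' := fun _ _ => rfl
      map_smul' := fun _ _ => rfl } 1 (by
    intro f
    rw [one_mul, lp.norm_eq_tsum_rpow hq, lp.norm_eq_tsum_rpow hq]
    exact (congrArg (· ^ (1 / q.toReal))
      ((Equiv.subRight (1 : ℤ)).tsum_eq fun n => ‖f n‖ ^ q.toReal)).le)

/-- The discrete gradient as a continuous linear map of `ℓ^q(ℤ)`. -/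
def lpGrad [Fact (1 ≤ q)] (hq : 0 < q.toReal) :
    lp (fun _ : ℤ => ℂ) q →L[ℂ] lp (fun _ : ℤ => ℂ) q :=
  ContinuousLinearMap.id ℂ _ - lpShift hq

theorem coeFn_lpGrad [Fact (1 ≤ q)] (hq : 0 < q.toReal) (f : lp (fun _ : ℤ => ℂ) q) :
    (lpGrad hq f : ℤ → ℂ) = dgrad f :=
  rfl

theorem coeFn_lpGrad_pow [Fact (1 ≤ q)] (hq : 0 < q.toReal) (m : ℕ)
    (f : lp (fun _ : ℤ => ℂ) q) :
    ((lpGrad hq ^ m) f : ℤ → ℂ) = dgrad^[m] f := by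
  induction m with
  | zero => rfl
  | succ m ih =>
    rw [pow_succ', mul_apply_eq_comp, coeFn_lpGrad, ih, Function.iterate_succ_apply']

theorem lpGrad_single [Fact (1 ≤ q)] (hq : 0 < q.toReal) (k : ℤ) (c : ℂ) :
    lpGrad hq (lp.single q k c) = lp.single q k c - lp.single q (k + 1) c := by
  ext n
  rw [coeFn_lpGrad, lp.coeFn_sub, Pi.sub_apply]
  simp only [dgrad, lp.single_apply, Pi.single_apply, sub_eq_iff_eq_add]

variable (q) in
/-- The finitely supported elements of `ℓ^q(ℤ)` vanishing below `a`. -/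
def finSuppFrom (a : ℤ) : Submodule ℂ (lp (fun _ : ℤ => ℂ) q) where
  carrier := {f | (∀ n < a, f n = 0) ∧ (Function.support (f : ℤ → ℂ)).Finite}
  zero_mem' := ⟨fun _ _ => rfl, by rw [lp.coeFn_zero, Function.support_zero]; exact Set.finite_empty⟩
  add_mem' := fun {f g} hf hg =>
    ⟨fun n hn => by simp [hf.1 n hn, hg.1 n hn],
      (hf.2.union hg.2).subset (Function.support_add (f : ℤ → ℂ) g)⟩
  smul_mem' := fun c f hf =>
    ⟨fun n hn => by simp [hf.1 n hn],
      hf.2.subset (Function.support_const_smul_subset c (f : ℤ → ℂ))⟩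

theorem single_mem_finSuppFrom {a k : ℤ} (hk : a ≤ k) (c : ℂ) :
    lp.single q k c ∈ finSuppFrom q a :=
  ⟨fun _ hn => lp.single_apply_ne (E := fun _ : ℤ => ℂ) q k c (hn.trans_le hk).ne,
    (Set.finite_singleton k).subset Pi.support_single_subset⟩

/-- A closed subspace containing all unit sequences supported in `[a, ∞)` contains every sequence
vanishing below `a`. -/
theorem mem_of_single_mem [Fact (1 ≤ q)] (hq : q ≠ ∞)
    {K : Submodule ℂ (lp (fun _ : ℤ => ℂ) q)} (hK : IsClosed (K : Set (lp (fun _ : ℤ => ℂ) q)))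
    {a : ℤ} (h : ∀ k, a ≤ k → ∀ c, lp.single q k c ∈ K)
    {f : lp (fun _ : ℤ => ℂ) q} (hf : ∀ n < a, f n = 0) : f ∈ K := by
  refine hK.mem_of_tendsto (lp.hasSum_single hq f) (.of_forall fun s => K.sum_mem fun k _ => ?_)
  rcases lt_or_ge k a with hk | hk
  · simp [hf k hk]
  · exact h k hk _

/-- Averages of translated unit sequences tend to zero in `ℓ^q` for `q > 1`. -/
theorem tendsto_average_single [Fact (1 ≤ q)] (hq : 1 < q.toReal) (k : ℤ) (c : ℂ) :
    Tendsto (fun N : ℕ => (N : ℂ)⁻¹ • ∑ j ∈ range N, lp.single (E := fun _ : ℤ => ℂ) q (k + j) c)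
      atTop (𝓝 0) := by
  have hq0 : 0 < q.toReal := one_pos.trans hq
  have norm_sum (N : ℕ) : ‖∑ j ∈ range N, lp.single (E := fun _ : ℤ => ℂ) q (k + j) c‖ =
      (N : ℝ) ^ (1 / q.toReal) * ‖c‖ := by
    have h := lp.norm_sum_single (E := fun _ : ℤ => ℂ) hq0 (fun _ => c)
      ((range N).map (Nat.castEmbedding.trans (addLeftEmbedding k)))
    simp only [sum_map, Function.Embedding.trans_apply, addLeftEmbedding_apply,
      Nat.castEmbedding_apply, sum_const, card_map, card_range, nsmul_eq_mul] at h
    rw [← Real.rpow_rpow_inv (norm_nonneg (∑ j ∈ range N, _)) hq0.ne', h,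
      Real.mul_rpow (by positivity) (by positivity), Real.rpow_rpow_inv (norm_nonneg c) hq0.ne',
      one_div]
  have decay : Tendsto (fun N : ℕ => (N : ℝ) ^ (-(1 - 1 / q.toReal)) * ‖c‖) atTop (𝓝 0) := by
    have hexp : 0 < 1 - 1 / q.toReal := sub_pos.2 ((div_lt_one hq0).2 hq)
    simpa using ((tendsto_rpow_neg_atTop hexp).comp tendsto_natCast_atTop_atTop).mul_const ‖c‖
  refine tendsto_zero_iff_norm_tendsto_zero.2 (decay.congr' ?_)
  filter_upwards [eventually_gt_atTop 0] with N hN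
  have hN' : (0 : ℝ) < N := Nat.cast_pos.2 hN
  rw [norm_smul, norm_sum, norm_inv, Complex.norm_natCast, ← mul_assoc, neg_sub,
    Real.rpow_sub_one hN'.ne', div_eq_inv_mul]

theorem single_sub_single_mem_map_lpGrad [Fact (1 ≤ q)] (hq : 0 < q.toReal) {a k : ℤ}
    (hk : a ≤ k) (c : ℂ) (j : ℕ) :
    lp.single q k c - lp.single q (k + j) c ∈
      (finSuppFrom q a).map (lpGrad hq).toLinearMap := by
  induction j with
  | zero => simp
  | succ j ih =>
    have h : lp.single q (k + j) c - lp.single q (k + j + 1) c ∈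
        (finSuppFrom q a).map (lpGrad hq).toLinearMap :=
      ⟨_, single_mem_finSuppFrom (by lia) c, lpGrad_single hq (k + j) c⟩
    simpa [add_assoc] using add_mem ih h

theorem single_mem_closure_map_lpGrad [Fact (1 ≤ q)] (hq : 1 < q.toReal) {a k : ℤ}
    (hk : a ≤ k) (c : ℂ) :
    lp.single q k c ∈ ((finSuppFrom q a).map
      (lpGrad (one_pos.trans hq)).toLinearMap).topologicalClosure := by
  have h := (tendsto_average_single hq k c).const_sub (lp.single q k c)
  rw [sub_zero] at h
  refine mem_closure_of_tendsto h ?_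
  filter_upwards [eventually_gt_atTop 0] with N hN
  have hN' : (N : ℂ) ≠ 0 := Nat.cast_ne_zero.2 hN.ne'
  have average : lp.single q k c -
        (N : ℂ)⁻¹ • ∑ j ∈ range N, lp.single (E := fun _ : ℤ => ℂ) q (k + j) c =
      (N : ℂ)⁻¹ • ∑ j ∈ range N,
        (lp.single q k c - lp.single (E := fun _ : ℤ => ℂ) q (k + j) c) := by
    rw [sum_sub_distrib, sum_const, card_range, smul_sub, ← Nat.cast_smul_eq_nsmul ℂ,
      inv_smul_smul₀ hN']
  rw [average]
  exact Submodule.smul_mem _ _ (Submodule.sum_mem _ fun j _ =>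
    single_sub_single_mem_map_lpGrad _ hk c j)

/-- The image of the finitely supported sequences under an iterated gradient is dense among the
sequences vanishing below `a`. -/
theorem mem_closure_map_lpGrad_pow [Fact (1 ≤ q)] (hq : 1 < q.toReal) (a : ℤ) (m : ℕ)
    {f : lp (fun _ : ℤ => ℂ) q} (hf : ∀ n < a, f n = 0) :
    f ∈ ((finSuppFrom q a).map
      (lpGrad (one_pos.trans hq) ^ m).toLinearMap).topologicalClosure := by
  have hq_top : q ≠ ∞ := (ENNReal.toReal_pos_iff.1 (one_pos.trans hq)).2.ne
  induction m generalizing f with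
  | zero =>
    refine mem_of_single_mem hq_top (Submodule.isClosed_topologicalClosure _)
      (fun k hk c => Submodule.le_topologicalClosure _ ?_) hf
    exact ⟨_, single_mem_finSuppFrom hk c, rfl⟩
  | succ m ih =>
    refine mem_of_single_mem hq_top (Submodule.isClosed_topologicalClosure _)
      (fun k hk c => ?_) hf
    refine closure_minimal ?_ (Submodule.isClosed_topologicalClosure _)
      (single_mem_closure_map_lpGrad hq hk c)
    rintro _ ⟨g, hg, rfl⟩
    refine map_mem_closure (lpGrad (one_pos.trans hq)).continuous (ih hg.1) ?_
    rintro _ ⟨u, hu, rfl⟩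
    refine ⟨u, hu, ?_⟩
    simp [pow_succ']

end Density

/-- Lemma 3.5: the range `{∇^ℓ u | u ∈ H_0^ℓ}` of the `ℓ`-th discrete
gradient restricted to `H_0^ℓ` is dense in `H^{ℓ,p} = H^ℓ ∩ ℓ^p(ℤ)` with respect to the
`ℓ^p`-norm. -/
theorem stmt_17 (ℓ : ℕ) (hℓ : 0 < ℓ) (p : ℝ) (hp : 1 < p) :
    ∀ v : ℤ → ℂ,
      (∀ n : ℤ, n < (ℓ : ℤ) → v n = 0) →
      Summable (fun n : ℤ => ‖v n‖ ^ p) →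
      ∀ ε : ℝ, 0 < ε →
        ∃ u : ℤ → ℂ,
          (∀ n : ℤ, n < (ℓ : ℤ) → u n = 0) ∧
          (Function.support u).Finite ∧
          (∑' n : ℤ, ‖dgrad^[ℓ] u n - v n‖ ^ p) ^ (1 / p) < ε := by
  intro v hv hsum ε hε
  have hq : (ENNReal.ofReal p).toReal = p := ENNReal.toReal_ofReal (by positivity)
  have hq1 : 1 < (ENNReal.ofReal p).toReal := hq.symm ▸ hp
  have hq0 : 0 < (ENNReal.ofReal p).toReal := one_pos.trans hq1
  have : Fact (1 ≤ ENNReal.ofReal p) := ⟨ENNReal.one_le_ofReal.2 hp.le⟩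
  let f : lp (fun _ : ℤ => ℂ) (ENNReal.ofReal p) := ⟨v, memℓp_gen (by rwa [hq])⟩
  obtain ⟨_, ⟨u, hu, rfl⟩, hdist⟩ :=
    Metric.mem_closure_iff.1 (mem_closure_map_lpGrad_pow hq1 ℓ ℓ (f := f) hv) ε hε
  refine ⟨u, hu.1, hu.2, ?_⟩
  rw [dist_comm, dist_eq_norm, lp.norm_eq_tsum_rpow hq0] at hdist
  have h : (∑' n : ℤ, ‖dgrad^[ℓ] u n - v n‖ ^ (ENNReal.ofReal p).toReal) ^
      (1 / (ENNReal.ofReal p).toReal) < ε := by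
    rw [← coeFn_lpGrad_pow hq0]
    exact hdist
  rwa [hq] at h
end
end
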